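/- Let 0<c₁<⋯<c_m be non-integer reals. There exist constants C>0 and κ>0 depending only on c₁,…,c_m, m such that for every N≥1 and all ξ₁,…,ξ_m∈ℝ, | (1/N) ∑_{n=1}^{N} 1_{n>N/2} e(ξ₁⌊n^{c₁}⌋+⋯+ξ_m⌊n^{c_m}⌋) | ≤ C ( N^{−κ} + min_{1≤i≤m} (‖ξ_i‖_𝕋 N^{c_i})^{−κ} ). -/

import Mathlib

/-!
The integer parts are removed by Fourier analysis. Modulo `1` one may assume `|ξᵢ| ≤ 1/2`, and
`e(ξ⌊y⌋) = e(ξy) e(-ξ{y})`. The periodic function `y ↦ e(-ξ{y})` is approximated by the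
trigonometric polynomial `fracApprox`, its Fejér interpolation at `K = M³` equispaced nodes, with
`M` a small power of `N`. The approximation fails only for `y` near an integer, and the number of
`n` with `n^{cᵢ}` near an integer is estimated with a Fejér kernel of order `M` (`sum_fejer_le`).
Expanding the product over `i` leaves smooth sums `∑ e(∑ θᵢ n^{cᵢ})` with `θᵢ - ξᵢ` an integer of
size below `K`. If all these integers vanish, the smooth sum is bounded in terms of
`|ξᵢ| N^{cᵢ}`, which gives the second term of the claim; otherwise some `|θᵢ| ≥ 1/2` and each smooth
sum saves a power of `N`, which beats the number `K^{2m}` of tuples (`approx_sum_le`,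
`floor_sum_bound`).

For a smooth sum (`smooth_bound`) put `T = maxᵢ |θᵢ| N^{cᵢ}`. Since the `cᵢ` are distinct
non-integers, a Vandermonde argument (`phase_lower`) shows that at each point of `[N/2, 4N]` some
derivative of bounded order of the phase has its maximal size `T N^{-k}`. If `T ≤ N^{3/4}`, the
increments of the phase are small and a discrete van der Corput lemma (`osc_uniform`) gives a
saving of a power of `T`. If `T` is larger, a bounded number of Weyl–van der Corput differencing
steps (`weyl_diff`) first brings the size of the phase down to between `N^{1/4}` and `N^{1/2}`, where
the same lemma applies (`diff_bound`, `large_phase_bound`).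
-/

open MeasureTheory Filter Finset
open scoped ENNReal NNReal

noncomputable section

/-- `e(x) = e^{2πix}`. -/
def eC (x : ℝ) : ℂ := Complex.exp (2 * Real.pi * Complex.I * x)

/-- The symbol of the upper-half discrete averaging operator:
`m_{N;ℤ}(ξ) = (1/N) ∑_{n=1}^{N} 1_{n>N/2} e(ξ₁⌊n^{c₁}⌋ + ⋯ + ξ_m⌊n^{c_m}⌋)`. -/
def mZ (m : ℕ) (c : Fin m → ℝ) (N : ℕ) (ξ : Fin m → ℝ) : ℂ :=
  (N : ℂ)⁻¹ * ∑ n ∈ Finset.Icc 1 N,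
    if N < 2 * n then eC (∑ i, ξ i * (⌊(n : ℝ) ^ c i⌋ : ℝ)) else 0

/-- `‖ξ‖_𝕋`, the distance from `ξ` to the nearest integer. -/
def distT (ξ : ℝ) : ℝ := |ξ - round ξ|

/-! ### The additive character -/

lemma eC_add (x y : ℝ) : eC (x + y) = eC x * eC y := by
  unfold eC; rw [← Complex.exp_add]; congr 1; push_cast; ring

lemma eC_zero : eC 0 = 1 := by simp [eC]

lemma eC_int (n : ℤ) : eC n = 1 := by
  unfold eC
  rw [Complex.exp_eq_one_iff]
  exact ⟨n, by push_cast; ring⟩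

lemma eC_eq (x : ℝ) : eC x = Complex.exp (Complex.I * ((2 * Real.pi * x : ℝ) : ℂ)) := by
  unfold eC; congr 1; push_cast; ring

lemma norm_eC (x : ℝ) : ‖eC x‖ = 1 := by
  rw [eC_eq, mul_comm, Complex.norm_exp_ofReal_mul_I]

lemma eC_neg (x : ℝ) : eC (-x) = (starRingEnd ℂ) (eC x) := by
  unfold eC
  rw [← Complex.exp_conj]
  congr 1
  simp [Complex.conj_ofNat]

lemma eC_sub (x y : ℝ) : eC (x - y) = eC x * (starRingEnd ℂ) (eC y) := by
  rw [sub_eq_add_neg, eC_add, eC_neg]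

lemma eC_sum {ι : Type*} (s : Finset ι) (f : ι → ℝ) : eC (∑ i ∈ s, f i) = ∏ i ∈ s, eC (f i) := by
  classical
  induction s using Finset.induction_on with
  | empty => simp [eC_zero]
  | insert a s ha ih => rw [sum_insert ha, prod_insert ha, eC_add, ih]

lemma norm_eC_sub_one (x : ℝ) : ‖eC x - 1‖ = 2 * |Real.sin (Real.pi * x)| := by
  rw [eC_eq, Complex.norm_exp_I_mul_ofReal_sub_one, Real.norm_eq_abs, abs_mul]
  rw [abs_of_pos (by norm_num : (0 : ℝ) < 2)]
  congr 3; ring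

lemma norm_eC_sub_one_ge {x : ℝ} (hx : |x| ≤ 1 / 2) : 4 * |x| ≤ ‖eC x - 1‖ := by
  have key : ∀ y : ℝ, 0 ≤ y → y ≤ 1 / 2 → 2 * y ≤ Real.sin (Real.pi * y) := by
    intro y h0 h1
    have hp := Real.pi_pos
    have := Real.mul_le_sin (x := Real.pi * y) (by positivity) (by nlinarith)
    have h2 : 2 / Real.pi * (Real.pi * y) = 2 * y := by field_simp
    linarith
  rw [norm_eC_sub_one]
  have h := key |x| (abs_nonneg _) hx
  have h3 : |Real.sin (Real.pi * x)| = |Real.sin (Real.pi * |x|)| := by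
    rcases abs_choice x with h' | h' <;> rw [h']
    rw [mul_neg, Real.sin_neg, abs_neg]
  rw [h3]
  have := le_abs_self (Real.sin (Real.pi * |x|))
  linarith

lemma norm_eC_sub_le (x y : ℝ) : ‖eC x - eC y‖ ≤ 2 * Real.pi * |x - y| := by
  have h : eC x - eC y = eC y * (eC (x - y) - 1) := by
    rw [mul_sub, ← eC_add]; ring_nf
  rw [h, norm_mul, norm_eC, one_mul, norm_eC_sub_one]
  have h1 : |Real.sin (Real.pi * (x - y))| ≤ |Real.pi * (x - y)| := Real.abs_sin_le_abs
  rw [abs_mul, abs_of_pos Real.pi_pos] at h1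
  linarith

/-- Summation of `e(g(n))` over an interval where the increments of `g` stay away from the
integers: the weak form of the Kusmin–Landau inequality, by summation by parts. -/
lemma norm_sum_eC_le_of_increment (g : ℕ → ℝ) (a b : ℕ) (hab : a ≤ b) (δ V : ℝ) (hδ : 0 < δ) (hV : 0 ≤ V)
    (h1 : ∀ n ∈ Ico a b, δ ≤ |g (n + 1) - g n|)
    (h2 : ∀ n ∈ Ico a b, |g (n + 1) - g n| ≤ 1 / 2)
    (h3 : ∀ n ∈ Ico a b, |(g (n + 2) - g (n + 1)) - (g (n + 1) - g n)| ≤ V) :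
    ‖∑ n ∈ Ico a b, eC (g n)‖ ≤ 1 / δ + ((b : ℝ) - a) * (V / δ ^ 2) := by
  rcases hab.eq_or_lt with rfl | hab
  · simp only [Ico_self, sum_empty, norm_zero, sub_self, zero_mul, add_zero]; positivity
  set d : ℕ → ℂ := fun n => eC (g (n + 1) - g n) - 1 with hd
  have hdl : ∀ n ∈ Ico a b, 4 * δ ≤ ‖d n‖ := fun n hn => by
    have := norm_eC_sub_one_ge (h2 n hn)
    have := h1 n hn
    simp only [hd]; linarith
  have hd0 : ∀ n ∈ Ico a b, d n ≠ 0 := fun n hn h0 => by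
    have := hdl n hn; rw [h0, norm_zero] at this; linarith
  have hw : ∀ n ∈ Ico a b, ‖(d n)⁻¹‖ ≤ 1 / (4 * δ) := fun n hn => by
    rw [norm_inv, ← one_div]
    exact one_div_le_one_div_of_le (by positivity) (hdl n hn)
  have hwd : ∀ n, n ∈ Ico a b → n + 1 ∈ Ico a b → ‖(d (n + 1))⁻¹ - (d n)⁻¹‖ ≤ V / δ ^ 2 := by
    intro n hn hn1
    have e1 : (d (n + 1))⁻¹ - (d n)⁻¹ = (d n - d (n + 1)) * ((d (n + 1))⁻¹ * (d n)⁻¹) := by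
      field_simp [hd0 n hn, hd0 _ hn1]
    have e2 : ‖d n - d (n + 1)‖ ≤ 8 * V := by
      have : d n - d (n + 1) = eC (g (n + 1) - g n) - eC (g (n + 2) - g (n + 1)) := by
        simp only [hd]; ring_nf
      rw [this]
      have h4 := norm_eC_sub_le (g (n + 1) - g n) (g (n + 2) - g (n + 1))
      have h5 := h3 n hn
      rw [abs_sub_comm] at h5
      have h6 := Real.pi_lt_four
      have h7 := Real.pi_pos
      calc _ ≤ 2 * Real.pi * V := h4.trans (by gcongr)
        _ ≤ 8 * V := by nlinarith
    rw [e1, norm_mul, norm_mul]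
    calc _ ≤ (8 * V) * ((1 / (4 * δ)) * (1 / (4 * δ))) := by
          gcongr
          · exact hw _ hn1
          · exact hw _ hn
      _ = (1 / 2) * (V / δ ^ 2) := by field_simp; ring
      _ ≤ V / δ ^ 2 := by
        have : 0 ≤ V / δ ^ 2 := by positivity
        linarith
  have hz : ∀ n ∈ Ico a b, eC (g n) = (eC (g (n + 1)) - eC (g n)) * (d n)⁻¹ := fun n hn => by
    have : eC (g (n + 1)) - eC (g n) = eC (g n) * d n := by
      simp only [hd, mul_sub, mul_one]
      rw [← eC_add]; ring_nf
    rw [this, mul_assoc, mul_inv_cancel₀ (hd0 n hn), mul_one]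
  have claim : ∀ k, a + k + 1 ≤ b →
      ‖∑ n ∈ Ico a (a + k + 1), eC (g n) - eC (g (a + k + 1)) * (d (a + k))⁻¹‖
        ≤ 1 / (4 * δ) + k * (V / δ ^ 2) := by
    intro k
    induction k with
    | zero =>
      intro hk
      have ha : a ∈ Ico a b := mem_Ico.2 ⟨le_rfl, hab⟩
      simp only [add_zero, Nat.cast_zero, zero_mul]
      rw [Nat.Ico_succ_singleton, sum_singleton]
      nth_rewrite 1 [hz a ha]
      rw [← sub_mul, norm_mul]
      have : eC (g (a + 1)) - eC (g a) - eC (g (a + 1)) = - eC (g a) := by ring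
      rw [this, norm_neg, norm_eC, one_mul]
      exact hw a ha
    | succ k ih =>
      intro hk
      have i1 : a + k ∈ Ico a b := mem_Ico.2 ⟨by omega, by omega⟩
      have i2 : a + k + 1 ∈ Ico a b := mem_Ico.2 ⟨by omega, by omega⟩
      have ih := ih (by omega)
      have e : ∑ n ∈ Ico a (a + (k + 1) + 1), eC (g n)
          - eC (g (a + (k + 1) + 1)) * (d (a + (k + 1)))⁻¹
          = (∑ n ∈ Ico a (a + k + 1), eC (g n) - eC (g (a + k + 1)) * (d (a + k))⁻¹)
            - eC (g (a + k + 1)) * ((d (a + k + 1))⁻¹ - (d (a + k))⁻¹) := by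
        rw [sum_Ico_succ_top (by omega), hz (a + (k + 1)) i2]
        simp only [← add_assoc]
        ring
      rw [e]
      refine (norm_sub_le _ _).trans ?_
      rw [norm_mul, norm_eC, one_mul]
      have := hwd _ i1 i2
      push_cast
      linarith
  obtain ⟨k, rfl⟩ : ∃ k, b = a + k + 1 := ⟨b - a - 1, by omega⟩
  have h := claim k le_rfl
  have i1 : a + k ∈ Ico a (a + k + 1) := mem_Ico.2 ⟨by omega, by omega⟩
  have h' := norm_le_norm_sub_add (∑ n ∈ Ico a (a + k + 1), eC (g n))
    (eC (g (a + k + 1)) * (d (a + k))⁻¹)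
  have h'' : ‖eC (g (a + k + 1)) * (d (a + k))⁻¹‖ ≤ 1 / (4 * δ) := by
    rw [norm_mul, norm_eC, one_mul]; exact hw _ i1
  have h4 : 1 / (4 * δ) = (1 / δ) / 4 := by field_simp
  have h5 : 0 < 1 / δ := by positivity
  have h6 : 0 ≤ V / δ ^ 2 := by positivity
  have h7 : ((a + k + 1 : ℕ) : ℝ) - a = k + 1 := by push_cast; ring
  rw [h7, add_mul, one_mul]
  rw [h4] at h h''
  linarith

/-! ### A discrete van der Corput lemma -/

lemma norm_sum_eC_le_card (g : ℕ → ℝ) {a b : ℕ} (hab : a ≤ b) :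
    ‖∑ n ∈ Ico a b, eC (g n)‖ ≤ (b : ℝ) - a := by
  refine (norm_sum_le _ _).trans ?_
  simp only [norm_eC, sum_const, Nat.card_Ico, nsmul_eq_mul, mul_one]
  rw [Nat.cast_sub hab]

/-- A property that propagates upwards in `[a, b)` switches on at a single point. -/
lemma exists_threshold (P : ℕ → Prop) (a b : ℕ) (hab : a ≤ b)
    (hP : ∀ n n', a ≤ n → n ≤ n' → n' < b → P n → P n') :
    ∃ p, a ≤ p ∧ p ≤ b ∧ (∀ n ∈ Ico a p, ¬ P n) ∧ (∀ n ∈ Ico p b, P n) := by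
  classical
  have hex : ∃ p, a ≤ p ∧ (p = b ∨ P p) := ⟨b, hab, Or.inl rfl⟩
  have hpb : Nat.find hex ≤ b := Nat.find_min' hex ⟨hab, Or.inl rfl⟩
  obtain ⟨h1, h2⟩ := Nat.find_spec hex
  refine ⟨Nat.find hex, h1, hpb, ?_, ?_⟩
  · intro n hn hPn
    obtain ⟨h3, h4⟩ := mem_Ico.1 hn
    exact Nat.find_min hex h4 ⟨h3, Or.inr hPn⟩
  · intro n hn
    obtain ⟨h3, h4⟩ := mem_Ico.1 hn
    rcases h2 with h2 | h2
    · omega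
    · exact hP _ _ h1 h3 h4 h2

/-- The functions `D k` are normalised iterated differences of `D 0`. If the `(j+1)`-st one is
bounded away from zero, then `e(T D₀)` has a power saving. The induction removes the short interval
on which the `j`-th difference is small. -/
lemma osc_aux (B : ℝ) (hB : 1 ≤ B) (j : ℕ) : ∃ C : ℝ, 1 ≤ C ∧ ∃ κ : ℝ, 0 < κ ∧ κ ≤ 1 ∧
    ∀ (N T l : ℝ) (D : ℕ → ℕ → ℝ) (a b : ℕ), a ≤ b → 1 ≤ T → T ≤ N / (2 * B) → 0 < l → l ≤ 1 →
      (∀ k n, D (k + 1) n = N * (D k (n + 1) - D k n)) → ((b : ℝ) - a ≤ N) →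
      (∀ n ∈ Ico a b, |D 1 n| ≤ B ∧ |D 2 n| ≤ B) →
      ((∀ n ∈ Ico a b, l ≤ D (j + 1) n) ∨ (∀ n ∈ Ico a b, D (j + 1) n ≤ -l)) →
      ‖∑ n ∈ Ico a b, eC (T * D 0 n)‖ ≤ C * (N * T ^ (-κ) / l ^ 2) := by
  induction j with
  | zero =>
    refine ⟨1 + B, by linarith, 1, one_pos, le_rfl, ?_⟩
    intro N T l D a b hab hT hTN hl hl1 hD hN hbd hsgn
    have hN0 : 2 * B * T ≤ N := by
      rw [le_div_iff₀ (by positivity)] at hTN; linarith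
    have hNp : 0 < N := by nlinarith
    have hTp : 0 < T := by linarith
    have e1 : ∀ n, T * D 0 (n + 1) - T * D 0 n = T / N * D 1 n := fun n => by
      rw [hD 0 n]; field_simp
    have e2 : ∀ n, (T * D 0 (n + 2) - T * D 0 (n + 1)) - (T * D 0 (n + 1) - T * D 0 n)
        = T / N ^ 2 * D 2 n := fun n => by
      rw [e1, e1 n, hD 1 n]; field_simp
    have hl' : ∀ n ∈ Ico a b, l ≤ |D 1 n| := fun n hn => by
      rcases hsgn with h | h
      · exact (h n hn).trans (le_abs_self _)
      · have := h n hn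
        have := neg_le_abs (D 1 n)
        simp only [zero_add] at *
        linarith
    have := norm_sum_eC_le_of_increment (fun n => T * D 0 n) a b hab (T / N * l) (T / N ^ 2 * B)
      (by positivity) (by positivity)
      (fun n hn => by
        simp only [e1, abs_mul, abs_of_pos (div_pos hTp hNp)]
        gcongr; exact hl' n hn)
      (fun n hn => by
        simp only [e1, abs_mul, abs_of_pos (div_pos hTp hNp)]
        calc T / N * |D 1 n| ≤ T / N * B := by gcongr; exact (hbd n hn).1
          _ ≤ 1 / 2 := by
            rw [div_mul_eq_mul_div, div_le_iff₀ hNp]; linarith)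
      (fun n hn => by
        simp only [e2, abs_mul]
        rw [abs_of_pos (by positivity : 0 < T / N ^ 2)]
        gcongr; exact (hbd n hn).2)
    refine this.trans ?_
    rw [Real.rpow_neg_one]
    have q1 : 1 / (T / N * l) ≤ N * T⁻¹ / l ^ 2 := by
      have : 1 / (T / N * l) = N * T⁻¹ / l ^ 2 * l := by field_simp
      rw [this]
      exact mul_le_of_le_one_right (by positivity) hl1
    have q2 : ((b : ℝ) - a) * (T / N ^ 2 * B / (T / N * l) ^ 2) ≤ B * (N * T⁻¹ / l ^ 2) := by
      calc _ ≤ N * (T / N ^ 2 * B / (T / N * l) ^ 2) := by gcongr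
        _ = B * (N * T⁻¹ / l ^ 2) := by field_simp
    linarith
  | succ j ih =>
    obtain ⟨C, hC, κ, hκ, hκ1, ih⟩ := ih
    refine ⟨2 * C + 3, by linarith, κ / 3, by positivity, by linarith, ?_⟩
    intro N T l D a b hab hT hTN hl hl1 hD hN hbd hsgn
    -- conjugation reduces the case of negative sign to positive sign
    wlog hpos : ∀ n ∈ Ico a b, l ≤ D (j + 1 + 1) n generalizing D
    · have hneg := hsgn.resolve_left hpos
      have := this (fun k n => - D k n) (fun k n => by simp only [hD k n]; ring)
        (fun n hn => by simpa using hbd n hn)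
        (Or.inl fun n hn => by have := hneg n hn; linarith)
        (fun n hn => by have := hneg n hn; linarith)
      have e : ∑ n ∈ Ico a b, eC (T * -D 0 n)
          = (starRingEnd ℂ) (∑ n ∈ Ico a b, eC (T * D 0 n)) := by
        rw [map_sum]
        refine sum_congr rfl fun n _ => ?_
        rw [← eC_neg, mul_neg]
      rwa [e, RCLike.norm_conj] at this
    have hN0 : 2 * B * T ≤ N := by
      rw [le_div_iff₀ (by positivity)] at hTN; linarith
    have hNp : 0 < N := by nlinarith
    have hTp : 0 < T := by linarith
    have hTN' : T ≤ N := by nlinarith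
    set E := D (j + 1) with hE
    have hstep : ∀ n n', a ≤ n → n ≤ n' → n' < b → E n + ((n' : ℝ) - n) * (l / N) ≤ E n' := by
      intro n n' h1 h2
      induction n', h2 using Nat.le_induction with
      | base => intro _; simp
      | succ k hk ihk =>
        intro h3
        have q := ihk (by omega)
        have q2 := hpos k (mem_Ico.2 ⟨by omega, by omega⟩)
        rw [hD (j + 1) k] at q2
        have q3 : l / N ≤ E (k + 1) - E k := by
          rw [div_le_iff₀ hNp]; linarith
        push_cast
        linarith
    have hmono : ∀ n n', a ≤ n → n ≤ n' → n' < b → E n ≤ E n' := by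
      intro n n' h1 h2 h3
      have := hstep n n' h1 h2 h3
      have h4 : (n : ℝ) ≤ n' := by exact_mod_cast h2
      have : 0 ≤ ((n' : ℝ) - n) * (l / N) := mul_nonneg (by linarith) (by positivity)
      linarith
    set t := T ^ (-(κ / 3)) with ht
    have htp : 0 < t := by positivity
    have ht1 : t ≤ 1 := Real.rpow_le_one_of_one_le_of_nonpos hT (by linarith)
    have hNt : 1 ≤ N * t := by
      have h1 : T ^ (κ / 3) ≤ N := by
        calc T ^ (κ / 3) ≤ T ^ (1 : ℝ) := Real.rpow_le_rpow_of_exponent_le hT (by linarith)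
          _ = T := Real.rpow_one T
          _ ≤ N := hTN'
      rw [ht, Real.rpow_neg hTp.le, ← div_eq_mul_inv, le_div_iff₀ (by positivity)]
      linarith
    have ht3 : T ^ (-κ) = t ^ 3 := by
      rw [ht, ← Real.rpow_natCast, ← Real.rpow_mul hTp.le]; congr 1; push_cast; ring
    set μ := l * t with hμ
    have hμp : 0 < μ := by positivity
    have hμ1 : μ ≤ 1 := by
      calc μ ≤ 1 * 1 := by rw [hμ]; gcongr
        _ = 1 := one_mul 1
    obtain ⟨p, hap, hpb, hp1, hp2⟩ := exists_threshold (fun n => -μ < E n) a b hab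
      (fun n n' h1 h2 h3 h4 => lt_of_lt_of_le h4 (hmono n n' h1 h2 h3))
    obtain ⟨q, hpq, hqb, hq1, hq2⟩ := exists_threshold (fun n => μ ≤ E n) p b hpb
      (fun n n' h1 h2 h3 h4 => le_trans h4 (hmono n n' (by omega) h2 h3))
    have cab : (a : ℝ) ≤ p := by exact_mod_cast hap
    have cpq : (p : ℝ) ≤ q := by exact_mod_cast hpq
    have cqb : (q : ℝ) ≤ b := by exact_mod_cast hqb
    have s1 := ih N T μ D a p hap hT hTN hμp hμ1 hD (by linarith)
      (fun n hn => hbd n (Ico_subset_Ico_right hpb hn))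
      (Or.inr fun n hn => not_lt.1 (hp1 n hn))
    have s3 := ih N T μ D q b hqb hT hTN hμp hμ1 hD (by linarith)
      (fun n hn => hbd n (Ico_subset_Ico_left (hap.trans hpq) hn))
      (Or.inl hq2)
    have s2 : ‖∑ n ∈ Ico p q, eC (T * D 0 n)‖ ≤ 2 * (N * t) + 1 := by
      refine (norm_sum_eC_le_card _ hpq).trans ?_
      rcases hpq.eq_or_lt with h | h
      · rw [h]; simp only [sub_self]; positivity
      have u1 : ¬ (μ ≤ E (q - 1)) := hq1 (q - 1) (mem_Ico.2 ⟨by omega, by omega⟩)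
      have u2 : -μ < E p := hp2 p (mem_Ico.2 ⟨le_rfl, by omega⟩)
      have u3 := hstep p (q - 1) (by omega) (by omega) (by omega)
      rw [Nat.cast_sub (by omega : 1 ≤ q), Nat.cast_one] at u3
      have u4 : ((q : ℝ) - 1 - p) * (l / N) ≤ 2 * μ := by linarith [not_le.1 u1]
      rw [hμ, mul_div_assoc', div_le_iff₀ hNp] at u4
      have u5 : ((q : ℝ) - 1 - p) ≤ 2 * (N * t) := by
        by_contra hcon
        have := mul_lt_mul_of_pos_right (not_le.1 hcon) hl
        linarith
      linarith
    have hid : N * T ^ (-κ) / μ ^ 2 = N * t / l ^ 2 := by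
      rw [ht3, hμ]; field_simp
    rw [hid] at s1 s3
    have hle : N * t ≤ N * t / l ^ 2 := by
      rw [le_div_iff₀ (by positivity)]
      exact mul_le_of_le_one_right (by positivity) (by nlinarith)
    have hsum : ∑ n ∈ Ico a b, eC (T * D 0 n) = ∑ n ∈ Ico a p, eC (T * D 0 n)
        + ∑ n ∈ Ico p q, eC (T * D 0 n) + ∑ n ∈ Ico q b, eC (T * D 0 n) := by
      rw [sum_Ico_consecutive _ hap hpq, sum_Ico_consecutive _ (hap.trans hpq) hqb]
    rw [hsum]
    have := norm_add₃_le (a := ∑ n ∈ Ico a p, eC (T * D 0 n))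
      (b := ∑ n ∈ Ico p q, eC (T * D 0 n)) (c := ∑ n ∈ Ico q b, eC (T * D 0 n))
    linarith

/-- Version of `osc_aux` with constants uniform in the order `j < m`. -/
lemma osc_uniform (B : ℝ) (hB : 1 ≤ B) (m : ℕ) : ∃ C : ℝ, 1 ≤ C ∧ ∃ κ : ℝ, 0 < κ ∧ κ ≤ 1 ∧
    ∀ j < m, ∀ (N T l : ℝ) (D : ℕ → ℕ → ℝ) (a b : ℕ), a ≤ b → 1 ≤ T → T ≤ N / (2 * B) → 0 < l →
      l ≤ 1 → (∀ k n, D (k + 1) n = N * (D k (n + 1) - D k n)) → ((b : ℝ) - a ≤ N) →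
      (∀ n ∈ Ico a b, |D 1 n| ≤ B ∧ |D 2 n| ≤ B) →
      ((∀ n ∈ Ico a b, l ≤ D (j + 1) n) ∨ (∀ n ∈ Ico a b, D (j + 1) n ≤ -l)) →
      ‖∑ n ∈ Ico a b, eC (T * D 0 n)‖ ≤ C * (N * T ^ (-κ) / l ^ 2) := by
  induction m with
  | zero => exact ⟨1, le_rfl, 1, one_pos, le_rfl, fun j hj => by omega⟩
  | succ m ih =>
    obtain ⟨C, hC, κ, hκ, hκ1, ih⟩ := ih
    obtain ⟨C', hC', κ', hκ', hκ1', ih'⟩ := osc_aux B hB m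
    refine ⟨max C C', le_max_of_le_left hC, min κ κ', lt_min hκ hκ', min_le_of_left_le hκ1, ?_⟩
    intro j hj N T l D a b hab hT hTN hl hl1 hD hN hbd hsgn
    have hNp : 0 ≤ N := by
      rw [le_div_iff₀ (by positivity)] at hTN; nlinarith
    rcases (Nat.lt_succ_iff_lt_or_eq.1 hj) with h | rfl
    · refine (ih j h N T l D a b hab hT hTN hl hl1 hD hN hbd hsgn).trans ?_
      gcongr
      · exact le_max_left _ _
      · exact min_le_left _ _
    · refine (ih' N T l D a b hab hT hTN hl hl1 hD hN hbd hsgn).trans ?_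
      gcongr
      · exact le_max_right _ _
      · exact min_le_right _ _

/-! ### Weyl–van der Corput differencing -/

/-- The copy of `z` restricted to `[a, b)` and translated by `h`. -/
def shiftedWindow (z : ℕ → ℂ) (a b k h : ℕ) : ℂ := if a + h ≤ k ∧ k < b + h then z (k - h) else 0

lemma sum_shiftedWindow (z : ℕ → ℂ) (a b H h : ℕ) (hh : h < H) :
    ∑ k ∈ Ico a (b + H), shiftedWindow z a b k h = ∑ n ∈ Ico a b, z n := by
  unfold shiftedWindow
  rw [← sum_filter]
  refine sum_nbij' (fun k => k - h) (fun n => n + h) ?_ ?_ ?_ ?_ ?_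
  · intro k hk; simp only [mem_filter, mem_Ico] at *; omega
  · intro k hk; simp only [mem_filter, mem_Ico] at *; omega
  · intro k hk; simp only [mem_filter, mem_Ico] at *; omega
  · intro k hk; simp only [mem_Ico] at *; omega
  · intro k hk; rfl

lemma sum_shiftedWindow_mul (z : ℕ → ℂ) (a b H h h' : ℕ) (hh : h ≤ h') (hH : h' < H) :
    ∑ k ∈ Ico a (b + H), shiftedWindow z a b k h * (starRingEnd ℂ) (shiftedWindow z a b k h')
      = ∑ n ∈ Ico a (b - (h' - h)), z (n + (h' - h)) * (starRingEnd ℂ) (z n) := by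
  have : ∀ k, shiftedWindow z a b k h * (starRingEnd ℂ) (shiftedWindow z a b k h')
      = if a + h' ≤ k ∧ k < b + h then z (k - h) * (starRingEnd ℂ) (z (k - h')) else 0 := by
    intro k
    unfold shiftedWindow
    by_cases h1 : a + h' ≤ k ∧ k < b + h
    · rw [if_pos h1, if_pos (by omega), if_pos (by omega)]
    · rw [if_neg h1]
      by_cases h2 : a + h ≤ k ∧ k < b + h
      · rw [if_neg (c := a + h' ≤ k ∧ k < b + h') (by omega), map_zero, mul_zero]
      · rw [if_neg h2, zero_mul]
  simp only [this]
  rw [← sum_filter]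
  refine sum_nbij' (fun k => k - h') (fun n => n + h') ?_ ?_ ?_ ?_ ?_
  · intro k hk; simp only [mem_filter, mem_Ico] at *; omega
  · intro k hk; simp only [mem_filter, mem_Ico] at *; omega
  · intro k hk; simp only [mem_filter, mem_Ico] at *; omega
  · intro k hk; simp only [mem_Ico] at *; omega
  · intro k hk
    simp only [mem_filter, mem_Ico] at hk
    rw [show k - h' + (h' - h) = k - h by omega]

/-- Van der Corput's inequality, in the form where differences `d < σH` are estimated
trivially. -/
lemma vdc_ineq (z : ℕ → ℂ) (hz : ∀ n, ‖z n‖ ≤ 1) (a b H : ℕ) (hab : a ≤ b) (N σ X : ℝ)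
    (hbN : (b : ℝ) - a ≤ N) (hH : 1 ≤ H) (hHN : (H : ℝ) ≤ N) (hσH : 1 ≤ σ * H) (hX : 0 ≤ X)
    (hd : ∀ d : ℕ, σ * H ≤ d → d < H →
      ‖∑ n ∈ Ico a (b - d), z (n + d) * (starRingEnd ℂ) (z n)‖ ≤ X * N) :
    ‖∑ n ∈ Ico a b, z n‖ ^ 2 ≤ N ^ 2 * (6 * σ + 2 * X) := by
  classical
  have hHp : (0 : ℝ) < H := by exact_mod_cast hH
  have hN0 : 0 < N := by linarith
  have hσ : 0 < σ := by
    by_contra h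
    have : σ * H ≤ 0 := mul_nonpos_of_nonpos_of_nonneg (not_lt.1 h) hHp.le
    linarith
  set S := ∑ n ∈ Ico a b, z n with hS
  set w := shiftedWindow z a b with hw
  set I := Ico a (b + H) with hI
  set c : ℕ → ℕ → ℂ := fun h h' => ∑ k ∈ I, w k h * (starRingEnd ℂ) (w k h') with hc
  have e1 : (H : ℂ) * S = ∑ k ∈ I, ∑ h ∈ range H, w k h := by
    rw [sum_comm]
    rw [sum_congr rfl (fun h hh => sum_shiftedWindow z a b H h (mem_range.1 hh))]
    simp [hS]
  have e2 : ((∑ k ∈ I, ‖∑ h ∈ range H, w k h‖ ^ 2 : ℝ) : ℂ)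
      = ∑ h ∈ range H, ∑ h' ∈ range H, c h h' := by
    have : ∀ k, ((‖∑ h ∈ range H, w k h‖ ^ 2 : ℝ) : ℂ)
        = ∑ h ∈ range H, ∑ h' ∈ range H, w k h * (starRingEnd ℂ) (w k h') := by
      intro k
      rw [Complex.ofReal_pow, ← Complex.mul_conj', map_sum, sum_mul_sum]
    rw [Complex.ofReal_sum, sum_congr rfl (fun k _ => this k), sum_comm]
    refine sum_congr rfl fun h _ => ?_
    rw [sum_comm]
  have hcs : ∀ h h', ‖c h' h‖ = ‖c h h'‖ := by
    intro h h'
    have : c h' h = (starRingEnd ℂ) (c h h') := by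
      simp only [hc, map_sum, map_mul, Complex.conj_conj]
      exact sum_congr rfl fun k _ => mul_comm _ _
    rw [this, RCLike.norm_conj]
  have ctriv : ∀ h h', h ≤ h' → h' < H → ‖c h h'‖ ≤ N := by
    intro h h' h1 h2
    simp only [hc]
    rw [sum_shiftedWindow_mul z a b H h h' h1 h2]
    refine (norm_sum_le _ _).trans ?_
    calc _ ≤ ∑ n ∈ Ico a (b - (h' - h)), (1 : ℝ) := by
          refine sum_le_sum fun n _ => ?_
          rw [norm_mul, RCLike.norm_conj]
          exact mul_le_one₀ (hz _) (norm_nonneg _) (hz _)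
      _ = ((b - (h' - h) - a : ℕ) : ℝ) := by simp
      _ ≤ ((b - a : ℕ) : ℝ) := by exact_mod_cast (by omega)
      _ ≤ N := by rw [Nat.cast_sub hab]; exact hbN
  have cgood : ∀ h h', h ≤ h' → h' < H → σ * H ≤ ((h' - h : ℕ) : ℝ) → ‖c h h'‖ ≤ X * N := by
    intro h h' h1 h2 h3
    simp only [hc]
    rw [sum_shiftedWindow_mul z a b H h h' h1 h2]
    exact hd _ h3 (by omega)
  set s := ⌊σ * H⌋₊ with hs
  have hsle : (s : ℝ) ≤ σ * H := Nat.floor_le (by positivity)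
  have crow : ∀ h ∈ range H, ∑ h' ∈ range H, ‖c h h'‖ ≤ 3 * σ * H * N + H * (X * N) := by
    intro h hh
    have hh := mem_range.1 hh
    have pt : ∀ h' ∈ range H, ‖c h h'‖ ≤ (if h' ∈ Icc (h - s) (h + s) then N else 0) + X * N := by
      intro h' hh'
      have hh' := mem_range.1 hh'
      split_ifs with hif
      · have : ‖c h h'‖ ≤ N := by
          rcases le_total h h' with h1 | h1
          · exact ctriv h h' h1 hh'
          · rw [hcs]; exact ctriv h' h h1 hh
        have : 0 ≤ X * N := by positivity
        linarith
      · rw [zero_add]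
        simp only [mem_Icc, not_and_or, not_le] at hif
        rcases le_total h h' with h1 | h1
        · refine cgood h h' h1 hh' ?_
          exact (Nat.lt_of_floor_lt (by omega)).le
        · rw [hcs]
          refine cgood h' h h1 hh ?_
          exact (Nat.lt_of_floor_lt (by omega)).le
    refine (sum_le_sum pt).trans ?_
    rw [sum_add_distrib, ← sum_filter, sum_const, sum_const, card_range, nsmul_eq_mul,
      nsmul_eq_mul]
    have hcard : #{h' ∈ range H | h' ∈ Icc (h - s) (h + s)} ≤ 2 * s + 1 := by
      calc _ ≤ #(Icc (h - s) (h + s)) := card_le_card (fun x hx => (mem_filter.1 hx).2)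
        _ ≤ 2 * s + 1 := by rw [Nat.card_Icc]; omega
    have hcard' : (#{h' ∈ range H | h' ∈ Icc (h - s) (h + s)} : ℝ) ≤ 2 * s + 1 := by
      exact_mod_cast hcard
    have : (#{h' ∈ range H | h' ∈ Icc (h - s) (h + s)} : ℝ) * N ≤ 3 * σ * H * N := by
      gcongr; linarith
    linarith
  have e3 : ∑ k ∈ I, ‖∑ h ∈ range H, w k h‖ ^ 2 ≤ H * (3 * σ * H * N + H * (X * N)) := by
    have h1 : ∑ k ∈ I, ‖∑ h ∈ range H, w k h‖ ^ 2
        = ‖∑ h ∈ range H, ∑ h' ∈ range H, c h h'‖ := by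
      rw [← e2, Complex.norm_real, Real.norm_of_nonneg (by positivity)]
    rw [h1]
    refine (norm_sum_le _ _).trans ?_
    calc _ ≤ ∑ h ∈ range H, (3 * σ * H * N + H * (X * N)) :=
          sum_le_sum fun h hh => (norm_sum_le _ _).trans (crow h hh)
      _ = _ := by rw [sum_const, card_range, nsmul_eq_mul]
  have e4 : (H * ‖S‖) ^ 2 ≤ (2 * N) * (H * (3 * σ * H * N + H * (X * N))) := by
    have h1 : H * ‖S‖ ≤ ∑ k ∈ I, ‖∑ h ∈ range H, w k h‖ := by
      have : H * ‖S‖ = ‖(H : ℂ) * S‖ := by simp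
      rw [this, e1]
      exact norm_sum_le _ _
    calc (H * ‖S‖) ^ 2 ≤ (∑ k ∈ I, ‖∑ h ∈ range H, w k h‖) ^ 2 := by gcongr
      _ ≤ #I * ∑ k ∈ I, ‖∑ h ∈ range H, w k h‖ ^ 2 := sq_sum_le_card_mul_sum_sq
      _ ≤ (2 * N) * (H * (3 * σ * H * N + H * (X * N))) := by
        gcongr
        rw [hI, Nat.card_Ico, Nat.cast_sub (by omega)]
        push_cast
        linarith
  have hH2 : (0 : ℝ) < (H : ℝ) ^ 2 := by positivity
  have e5 : (H : ℝ) ^ 2 * ‖S‖ ^ 2 ≤ (H : ℝ) ^ 2 * (N ^ 2 * (6 * σ + 2 * X)) := by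
    calc _ = (H * ‖S‖) ^ 2 := by ring
      _ ≤ _ := e4
      _ = _ := by ring
  exact le_of_mul_le_mul_left e5 hH2

/-- Forward difference with step `h`. -/
def fdiff (h : ℕ) (f : ℝ → ℝ) : ℝ → ℝ := fun x => f (x + h) - f x

/-- Iterated forward differences, with the steps given by a list. -/
def fdiffs : List ℕ → (ℝ → ℝ) → ℝ → ℝ
  | [], f => f
  | h :: l, f => fdiffs l (fdiff h f)

lemma fdiffs_append_singleton (l : List ℕ) (h : ℕ) (f : ℝ → ℝ) :
    fdiffs (l ++ [h]) f = fdiff h (fdiffs l f) := by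
  induction l generalizing f with
  | nil => rfl
  | cons a l ih => exact ih _

/-- `Q`-fold application of van der Corput's inequality. -/
lemma weyl_diff (N σ X : ℝ) (H : ℕ) (hH : 1 ≤ H) (hHN : (H : ℝ) ≤ N) (hσH : 1 ≤ σ * H)
    (hσX : σ ≤ X) (hX1 : X ≤ 1) (Q : ℕ) : ∀ (f : ℝ → ℝ) (a b : ℕ), a ≤ b → (b : ℝ) - a ≤ N →
    (∀ l : List ℕ, l.length = Q → (∀ h ∈ l, σ * H ≤ h ∧ h < H) →
      ∀ a' b', a ≤ a' → a' ≤ b' → b' ≤ b →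
        ‖∑ n ∈ Ico a' b', eC (fdiffs l f n)‖ ≤ X * N) →
    ‖∑ n ∈ Ico a b, eC (f n)‖ ≤ 10 * X ^ ((1 / 2 : ℝ) ^ Q) * N := by
  have hHp : (0 : ℝ) < H := by exact_mod_cast hH
  have hN0 : 0 < N := by linarith
  have hσ : 0 < σ := by
    by_contra h
    have : σ * H ≤ 0 := mul_nonpos_of_nonpos_of_nonneg (not_lt.1 h) hHp.le
    linarith
  have hX0 : 0 < X := by linarith
  induction Q with
  | zero =>
    intro f a b hab _ h
    have := h [] rfl (by simp) a b le_rfl hab le_rfl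
    simp only [pow_zero, Real.rpow_one]
    refine this.trans ?_
    have : 0 < X * N := by positivity
    linarith
  | succ Q ih =>
    intro f a b hab hbN h
    set Y := X ^ ((1 / 2 : ℝ) ^ Q) with hY
    have hY0 : 0 < Y := by positivity
    have hXY : X ≤ Y := by
      calc X = X ^ (1 : ℝ) := (Real.rpow_one X).symm
        _ ≤ Y := Real.rpow_le_rpow_of_exponent_ge hX0 hX1 (pow_le_one₀ (by norm_num) (by norm_num))
    have key := vdc_ineq (fun n => eC (f n)) (fun n => (norm_eC _).le) a b H hab N σ (10 * Y)
      hbN hH hHN hσH (by positivity) (by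
        intro d hd1 hd2
        rcases le_or_gt a (b - d) with hdb | hdb
        · have := ih (fdiff d f) a (b - d) hdb (by
            have : ((b - d : ℕ) : ℝ) ≤ b := by exact_mod_cast Nat.sub_le b d
            linarith) (by
            intro l hl1 hl2 a' b' h1 h2 h3
            exact h (d :: l) (by simp [hl1]) (by
              intro x hx
              rcases List.mem_cons.1 hx with rfl | hx
              · exact ⟨hd1, hd2⟩
              · exact hl2 x hx) a' b' h1 h2 (by omega))
          have e : ∀ n : ℕ, eC (f (n + d : ℕ)) * (starRingEnd ℂ) (eC (f n))
              = eC (fdiff d f n) := by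
            intro n
            rw [← eC_sub, fdiff]; push_cast; rfl
          simp only [e]
          exact this
        · rw [Ico_eq_empty (by omega), sum_empty, norm_zero]; positivity)
    have hYs : Y = (X ^ ((1 / 2 : ℝ) ^ (Q + 1))) ^ 2 := by
      rw [hY, ← Real.rpow_mul_natCast hX0.le]
      congr 1; rw [pow_succ]; push_cast; ring
    set Z := X ^ ((1 / 2 : ℝ) ^ (Q + 1)) with hZ
    have hZ0 : 0 < Z := by positivity
    have : ‖∑ n ∈ Ico a b, eC (f n)‖ ^ 2 ≤ (10 * Z * N) ^ 2 := by
      refine key.trans ?_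
      have : 6 * σ + 2 * (10 * Y) ≤ 100 * Y := by linarith
      calc N ^ 2 * (6 * σ + 2 * (10 * Y)) ≤ N ^ 2 * (100 * Y) := by gcongr
        _ = (10 * Z * N) ^ 2 := by rw [hYs]; ring
    exact le_of_sq_le_sq this (by positivity)

/-! ### Derivatives of the smooth phase -/

/-- Mean value theorem for iterated differences: they equal the product of the steps times a
derivative of order `l.length` at an intermediate point. Here `f k` is the `k`-th derivative. -/
lemma fdiffs_mvt (l : List ℕ) : ∀ (f : ℕ → ℝ → ℝ),
    (∀ k t, 0 < t → HasDerivAt (f k) (f (k + 1) t) t) → ∀ x : ℝ, 0 < x →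
    ∃ ζ, x ≤ ζ ∧ ζ ≤ x + l.sum ∧ fdiffs l (f 0) x = l.prod * f l.length ζ := by
  induction l with
  | nil => intro f _ x _; exact ⟨x, le_rfl, by simp, by simp [fdiffs]⟩
  | cons h l ih =>
    intro f hf x hx
    obtain ⟨ζ, h1, h2, h3⟩ := ih (fun k => fdiff h (f k)) (fun k t ht => by
      unfold fdiff
      refine HasDerivAt.sub ?_ (hf k t ht)
      have := hf k (t + h) (by positivity)
      exact HasDerivAt.comp_add_const t (h : ℝ) this) x hx
    have hζ : 0 < ζ := lt_of_lt_of_le hx h1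
    have hstep : ∃ ζ', ζ ≤ ζ' ∧ ζ' ≤ ζ + h ∧ fdiff h (f l.length) ζ = h * f (l.length + 1) ζ' := by
      rcases Nat.eq_zero_or_pos h with rfl | hh
      · exact ⟨ζ, le_rfl, by simp, by simp [fdiff]⟩
      · have hh' : (0 : ℝ) < h := by exact_mod_cast hh
        obtain ⟨y, hy, hy'⟩ := exists_hasDerivAt_eq_slope (f l.length) (f (l.length + 1))
          (show ζ < ζ + h by linarith)
          (fun t ht => (hf _ t (by linarith [ht.1])).continuousAt.continuousWithinAt)
          (fun t ht => hf _ t (by linarith [ht.1]))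
        refine ⟨y, hy.1.le, hy.2.le, ?_⟩
        rw [hy', fdiff, add_sub_cancel_left]
        field_simp
    obtain ⟨ζ', h4, h5, h6⟩ := hstep
    refine ⟨ζ', h1.trans h4, ?_, ?_⟩
    · rw [List.sum_cons, Nat.cast_add]; linarith
    · change fdiffs l (fdiff h (f 0)) x = _
      rw [h3, h6, List.prod_cons, List.length_cons, Nat.cast_mul]
      ring

/-- The `k`-th derivative of `∑ θᵢ t^{cᵢ}` on `t > 0`. -/
def phase {m : ℕ} (c θ : Fin m → ℝ) (k : ℕ) (t : ℝ) : ℝ :=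
  ∑ i, θ i * ((descPochhammer ℝ k).eval (c i) * t ^ (c i - k))

lemma hasDerivAt_phase {m : ℕ} (c θ : Fin m → ℝ) (k : ℕ) (t : ℝ) (ht : 0 < t) :
    HasDerivAt (phase c θ k) (phase c θ (k + 1) t) t := by
  unfold phase
  refine HasDerivAt.fun_sum fun i _ => ?_
  refine HasDerivAt.const_mul _ ?_
  rw [descPochhammer_succ_eval, mul_assoc]
  refine HasDerivAt.const_mul _ ?_
  have := Real.hasDerivAt_rpow_const (x := t) (p := c i - k) (Or.inl ht.ne')
  rwa [show c i - ((k + 1 : ℕ) : ℝ) = c i - k - 1 by push_cast; ring]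

lemma rpow_le_four {s : ℝ} (h1 : 1 / 2 ≤ s) (h2 : s ≤ 4) (e : ℝ) : s ^ e ≤ 4 ^ |e| := by
  have hs : 0 < s := by linarith
  rcases le_total 0 e with he | he
  · rw [abs_of_nonneg he]; exact Real.rpow_le_rpow hs.le h2 he
  · rw [abs_of_nonpos he, show s ^ e = (s⁻¹) ^ (-e) by
      rw [Real.inv_rpow hs.le, Real.rpow_neg hs.le, inv_inv]]
    refine Real.rpow_le_rpow (by positivity) ?_ (by linarith)
    calc s⁻¹ ≤ (1 / 2)⁻¹ := inv_anti₀ (by norm_num) h1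
      _ ≤ 4 := by norm_num

lemma four_rpow_le {s : ℝ} (h1 : 1 / 2 ≤ s) (h2 : s ≤ 4) (e : ℝ) : ((4 : ℝ) ^ |e|)⁻¹ ≤ s ^ e := by
  have hs : 0 < s := by linarith
  have := rpow_le_four h1 h2 (-e)
  rw [abs_neg, Real.rpow_neg hs.le] at this
  exact (inv_le_comm₀ (by positivity) (by positivity)).1 this

/-- The phase in the normalised variable `s = t / N`. -/
lemma pow_mul_phase {m : ℕ} (c θ : Fin m → ℝ) (k : ℕ) {N t : ℝ} (hN : 0 < N) (ht : 0 < t) :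
    N ^ k * phase c θ k t
      = ∑ i, θ i * N ^ (c i) * ((descPochhammer ℝ k).eval (c i) * (t / N) ^ (c i - k)) := by
  unfold phase
  rw [mul_sum]
  refine sum_congr rfl fun i _ => ?_
  rw [Real.div_rpow ht.le hN.le, Real.rpow_sub hN, Real.rpow_natCast]
  field_simp

/-- Trivial bound for the derivatives: every normalised derivative is `O(1)` when `T` dominates all
`|θᵢ| N^{cᵢ}`. -/
lemma phase_upper {m : ℕ} (c : Fin m → ℝ) (K : ℕ) : ∃ B : ℝ, 1 ≤ B ∧ ∀ k ≤ K, ∀ (N T t : ℝ)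
    (θ : Fin m → ℝ), 0 < N → 0 < T → (∀ i, |θ i| * N ^ (c i) ≤ T) → N / 2 ≤ t → t ≤ 4 * N →
    |N ^ k / T * phase c θ k t| ≤ B := by
  set b : ℕ → ℝ := fun k => ∑ i, |(descPochhammer ℝ k).eval (c i)| * 4 ^ |c i - k| with hb
  have hb0 : ∀ k, 0 ≤ b k := fun k => sum_nonneg fun i _ => by positivity
  refine ⟨1 + ∑ k ∈ range (K + 1), b k, by
    have : 0 ≤ ∑ k ∈ range (K + 1), b k := sum_nonneg fun k _ => hb0 k
    linarith, ?_⟩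
  intro k hk N T t θ hN hT hθ h1 h2
  have ht : 0 < t := by linarith
  have s1 : 1 / 2 ≤ t / N := by rw [le_div_iff₀ hN]; linarith
  have s2 : t / N ≤ 4 := by rw [div_le_iff₀ hN]; linarith
  have hle : b k ≤ ∑ k ∈ range (K + 1), b k :=
    single_le_sum (f := b) (fun k _ => hb0 k) (mem_range.2 (by omega))
  have e : N ^ k / T * phase c θ k t = (N ^ k * phase c θ k t) / T := by ring
  rw [e, abs_div, abs_of_pos hT, div_le_iff₀ hT, pow_mul_phase c θ k hN ht]
  calc _ ≤ ∑ i, T * (|(descPochhammer ℝ k).eval (c i)| * 4 ^ |c i - k|) := by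
        refine (abs_sum_le_sum_abs _ _).trans (sum_le_sum fun i _ => ?_)
        rw [abs_mul, abs_mul, abs_mul, abs_of_pos (Real.rpow_pos_of_pos hN _),
          abs_of_pos (Real.rpow_pos_of_pos (div_pos ht hN) _)]
        gcongr
        · exact hθ i
        · exact rpow_le_four s1 s2 _
    _ = T * b k := by rw [hb, mul_sum]
    _ ≤ _ := by rw [mul_comm]; gcongr; linarith

lemma descPochhammer_eval_ne_zero {x : ℝ} (hx : ∀ k : ℤ, x ≠ k) (n : ℕ) :
    (descPochhammer ℝ n).eval x ≠ 0 := by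
  rw [descPochhammer_eval_eq_prod_range]
  refine prod_ne_zero_iff.2 fun j _ h => hx j ?_
  push_cast; linarith

lemma descPochhammer_eval_add (x : ℝ) (n r : ℕ) : (descPochhammer ℝ (n + r)).eval x
    = (descPochhammer ℝ n).eval x * (descPochhammer ℝ r).eval (x - n) := by
  rw [← descPochhammer_mul]
  simp

/-- Nondegeneracy: since the exponents are distinct and not integers, a Vandermonde determinant
shows that some derivative of order `Q+1, …, Q+m` is as large as the trivial bound allows. -/
lemma phase_lower {m : ℕ} (c : Fin m → ℝ) (hc : Function.Injective c)
    (hint : ∀ i, ∀ k : ℤ, c i ≠ (k : ℝ)) (Q : ℕ) : ∃ β : ℝ, 0 < β ∧ β ≤ 1 ∧ ∀ (N T t : ℝ)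
    (θ : Fin m → ℝ), 0 < N → 0 < T → (∃ i, |θ i| * N ^ (c i) = T) → N / 2 ≤ t → t ≤ 4 * N →
    ∃ r < m, β ≤ |N ^ (Q + 1 + r) / T * phase c θ (Q + 1 + r) t| := by
  set x : Fin m → ℝ := fun i => c i - (Q + 1 : ℕ) with hx
  set M : Matrix (Fin m) (Fin m) ℝ :=
    Matrix.of (fun i r => (descPochhammer ℝ (r : ℕ)).eval (x i)) with hM
  have hdet : M.det ≠ 0 := by
    rw [hM, ← Matrix.det_eval_matrixOfPolynomials_eq_det_vandermonde x
      (fun r => descPochhammer ℝ (r : ℕ)) (fun r => descPochhammer_natDegree ℝ r)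
      (fun r => monic_descPochhammer ℝ r)]
    rw [Matrix.det_vandermonde_ne_zero_iff]
    intro i j hij
    simp only [hx] at hij
    exact hc (by linarith)
  set A : ℝ := 1 + ∑ i, ∑ r, |M⁻¹ r i| with hA
  have hA0 : 0 < A := by
    have : 0 ≤ ∑ i, ∑ r, |M⁻¹ r i| := sum_nonneg fun i _ => sum_nonneg fun r _ => abs_nonneg _
    linarith
  set ρ : Fin m → ℝ := fun i =>
    |(descPochhammer ℝ (Q + 1)).eval (c i)| * ((4 : ℝ) ^ |x i|)⁻¹ with hρ
  have hρ0 : ∀ i, 0 < ρ i := fun i => by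
    have := abs_pos.2 (descPochhammer_eval_ne_zero (hint i) (Q + 1))
    simp only [hρ]; positivity
  obtain ⟨ρ0, hρ00, hρ01⟩ : ∃ ρ0 : ℝ, 0 < ρ0 ∧ ∀ i, ρ0 ≤ ρ i := by
    rcases isEmpty_or_nonempty (Fin m) with h | h
    · exact ⟨1, one_pos, fun i => h.elim i⟩
    · obtain ⟨i0, hi0⟩ := Finite.exists_min ρ
      exact ⟨ρ i0, hρ0 i0, hi0⟩
  refine ⟨min 1 (ρ0 / (A * 4 ^ m)), lt_min one_pos (by positivity), min_le_left _ _, ?_⟩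
  set β := min 1 (ρ0 / (A * 4 ^ m)) with hβ
  have hβ0 : 0 < β := lt_min one_pos (by positivity)
  intro N T t θ hN hT ⟨i0, hi0⟩ h1 h2
  by_contra! hcon
  have ht : 0 < t := by linarith
  set s := t / N with hs
  have s1 : 1 / 2 ≤ s := by rw [hs, le_div_iff₀ hN]; linarith
  have s2 : s ≤ 4 := by rw [hs, div_le_iff₀ hN]; linarith
  have s0 : 0 < s := by linarith
  set y : Fin m → ℝ := fun i =>
    θ i * N ^ (c i) / T * ((descPochhammer ℝ (Q + 1)).eval (c i) * s ^ (x i)) with hy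
  have hrow : ∀ r : Fin m, |Matrix.vecMul y M r| ≤ 4 ^ m * β := by
    intro r
    have e : Matrix.vecMul y M r
        = s ^ (r : ℕ) * (N ^ (Q + 1 + r) / T * phase c θ (Q + 1 + r) t) := by
      have e1 : N ^ (Q + 1 + (r : ℕ)) / T * phase c θ (Q + 1 + r) t
          = (N ^ (Q + 1 + (r : ℕ)) * phase c θ (Q + 1 + r) t) / T := by ring
      rw [e1, pow_mul_phase c θ _ hN ht, Matrix.vecMul, dotProduct, sum_div, mul_sum]
      refine sum_congr rfl fun i _ => ?_
      have e2 : s ^ (c i - ((Q + 1 + (r : ℕ) : ℕ) : ℝ)) = s ^ (x i) / s ^ (r : ℕ) := by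
        rw [← Real.rpow_natCast s, ← Real.rpow_sub s0]
        congr 1; simp only [hx]; push_cast; ring
      rw [← hs, e2, descPochhammer_eval_add]
      simp only [hM, hy, Matrix.of_apply, hx]
      field_simp
    rw [e, abs_mul, abs_of_pos (by positivity : 0 < s ^ (r : ℕ))]
    have h4 : s ^ (r : ℕ) ≤ 4 ^ m := by
      calc s ^ (r : ℕ) ≤ 4 ^ (r : ℕ) := by gcongr
        _ ≤ 4 ^ m := pow_le_pow_right₀ (by norm_num) r.2.le
    exact mul_le_mul h4 (hcon r r.2).le (abs_nonneg _) (by positivity)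
  have hyi : y = Matrix.vecMul (Matrix.vecMul y M) M⁻¹ := by
    rw [Matrix.vecMul_vecMul, Matrix.mul_nonsing_inv _ (isUnit_iff_ne_zero.2 hdet),
      Matrix.vecMul_one]
  have hup : |y i0| < A * (4 ^ m * β) := by
    have hp : 0 < 4 ^ m * β := by positivity
    calc |y i0| ≤ ∑ r, |M⁻¹ r i0| * (4 ^ m * β) := by
          nth_rewrite 1 [hyi]
          rw [Matrix.vecMul, dotProduct]
          refine (abs_sum_le_sum_abs _ _).trans (sum_le_sum fun r _ => ?_)
          rw [abs_mul, mul_comm]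
          exact mul_le_mul_of_nonneg_left (hrow r) (abs_nonneg _)
      _ = (∑ r, |M⁻¹ r i0|) * (4 ^ m * β) := by rw [sum_mul]
      _ < A * (4 ^ m * β) := by
        gcongr
        have : ∑ r, |M⁻¹ r i0| ≤ ∑ i, ∑ r, |M⁻¹ r i| :=
          single_le_sum (f := fun i => ∑ r, |M⁻¹ r i|)
            (fun i _ => sum_nonneg fun r _ => abs_nonneg _) (mem_univ i0)
        linarith
  have hlow : ρ0 ≤ |y i0| := by
    refine (hρ01 i0).trans ?_
    simp only [hy, hρ]
    rw [abs_mul, abs_div, abs_mul, abs_of_pos (Real.rpow_pos_of_pos hN _), hi0, abs_of_pos hT,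
      div_self hT.ne', one_mul, abs_mul, abs_of_pos (Real.rpow_pos_of_pos s0 _)]
    gcongr
    exact four_rpow_le s1 s2 _
  have hfin : A * (4 ^ m * β) ≤ ρ0 := by
    have : β ≤ ρ0 / (A * 4 ^ m) := min_le_right _ _
    rw [le_div_iff₀ (by positivity)] at this
    linarith
  linarith

/-! ### Smooth exponential sums -/

lemma norm_sum_le_blocks (f : ℕ → ℂ) (L : ℕ) (hL : 1 ≤ L) (E : ℝ) (hE : 0 ≤ E) (a b : ℕ)
    (hab : a ≤ b) (h : ∀ a' b', a ≤ a' → a' ≤ b' → b' ≤ b → b' - a' ≤ L →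
      ‖∑ n ∈ Ico a' b', f n‖ ≤ E) :
    ‖∑ n ∈ Ico a b, f n‖ ≤ (((b : ℝ) - a) / L + 1) * E := by
  have key : ∀ k : ℕ, ∀ b', a ≤ b' → b' ≤ b → b' ≤ a + k * L →
      ‖∑ n ∈ Ico a b', f n‖ ≤ k * E := by
    intro k
    induction k with
    | zero =>
      intro b' h1 h2 h3
      rw [Ico_eq_empty (by omega)]; simp
    | succ k ih =>
      intro b' h1 h2 h3
      rw [add_mul, one_mul] at h3
      have hmid : a ≤ min b' (a + k * L) := le_min h1 (by omega)
      rw [← sum_Ico_consecutive f hmid (min_le_left _ _)]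
      refine (norm_add_le _ _).trans ?_
      have q1 := ih (min b' (a + k * L)) hmid (by omega) (min_le_right _ _)
      have q2 := h (min b' (a + k * L)) b' hmid (min_le_left _ _) h2 (by omega)
      push_cast
      linarith
  have := key ((b - a) / L + 1) b hab le_rfl (by
    have := Nat.lt_div_mul_add (a := b - a) (b := L) (by omega)
    rw [add_mul]; omega)
  refine this.trans ?_
  gcongr
  push_cast
  gcongr
  refine Nat.cast_div_le.trans ?_
  rw [Nat.cast_sub hab]

/-- Bound for the differenced sums, in the range where the differenced phase has size
`T' = T h₁⋯h_Q / N^Q` between `1` and a small multiple of `N`. -/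
lemma diff_bound {m : ℕ} (c : Fin m → ℝ) (hc : Function.Injective c)
    (hint : ∀ i, ∀ k : ℤ, c i ≠ (k : ℝ)) (Q : ℕ) :
    ∃ C : ℝ, 1 ≤ C ∧ ∃ κ : ℝ, 0 < κ ∧ κ ≤ 1 ∧ ∃ η : ℝ, 0 < η ∧
    ∀ (N : ℕ) (T T' : ℝ) (θ : Fin m → ℝ) (l : List ℕ) (a b : ℕ), 1 ≤ N → 0 < T →
      (∀ i, |θ i| * (N : ℝ) ^ (c i) ≤ T) → (∃ i, |θ i| * (N : ℝ) ^ (c i) = T) →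
      l.length = Q → T' = T * l.prod / (N : ℝ) ^ Q → 1 ≤ T' → T' ≤ η * N →
      (l.sum : ℝ) + (m + 1) ≤ η * N → a ≤ b → N ≤ 2 * a → b ≤ N + 1 →
      ‖∑ n ∈ Ico a b, eC (fdiffs l (phase c θ 0) n)‖ ≤ C * (N * T' ^ (-κ)) := by
  obtain ⟨B, hB, hup⟩ := phase_upper c (Q + m + 2)
  obtain ⟨β, hβ, hβ1, hlow⟩ := phase_lower c hc hint Q
  obtain ⟨C, hC, κ, hκ, hκ1, hosc⟩ := osc_uniform B hB m
  set η := β / (4 * B) with hη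
  have hη0 : 0 < η := by positivity
  have hη4 : η ≤ 1 / 4 := by
    rw [hη, div_le_iff₀ (by positivity)]; linarith
  have hηB : η * B = β / 4 := by rw [hη]; field_simp
  have hC' : 1 ≤ (2 / η + 1) * (C * 4 / β ^ 2) := by
    have h1 : 1 ≤ 2 / η + 1 := by
      have : 0 < 2 / η := by positivity
      linarith
    have h2 : 1 ≤ C * 4 / β ^ 2 := by
      rw [le_div_iff₀ (by positivity)]; nlinarith
    exact one_le_mul_of_one_le_of_one_le h1 h2
  refine ⟨(2 / η + 1) * (C * 4 / β ^ 2), hC', κ, hκ, hκ1, η, hη0, ?_⟩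
  intro N T T' θ l a b hN hT hθ hθ' hl hT' hT'1 hT'N hsum hab hNa hbN
  have hNp : (0 : ℝ) < N := by exact_mod_cast hN
  have hT'p : 0 < T' := by linarith
  have hprod : (l.prod : ℝ) ≠ 0 := by
    intro h; rw [h] at hT'; simp at hT'; linarith
  have hNa' : (N : ℝ) ≤ 2 * a := by exact_mod_cast hNa
  have hbN' : (b : ℝ) ≤ N + 1 := by exact_mod_cast hbN
  have hm0 : (0 : ℝ) ≤ m := Nat.cast_nonneg m
  have hl0 : (0 : ℝ) ≤ l.sum := Nat.cast_nonneg _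
  set D : ℕ → ℕ → ℝ := fun j n =>
    (N : ℝ) ^ j / T' * fdiffs (l ++ List.replicate j 1) (phase c θ 0) n with hD
  have hDrec : ∀ k n, D (k + 1) n = N * (D k (n + 1) - D k n) := by
    intro k n
    simp only [hD]
    rw [List.replicate_succ', ← List.append_assoc, fdiffs_append_singleton, fdiff]
    push_cast
    ring
  have hD0 : ∀ n, T' * D 0 n = fdiffs l (phase c θ 0) n := by
    intro n
    simp only [hD, List.replicate_zero, List.append_nil, pow_zero]
    field_simp
  -- the differences are derivatives at nearby points
  have hmvt : ∀ j n : ℕ, a ≤ n → ∃ ζ : ℝ, n ≤ ζ ∧ ζ ≤ n + (l.sum + j) ∧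
      D j n = (N : ℝ) ^ (Q + j) / T * phase c θ (Q + j) ζ := by
    intro j n hn
    have hn0 : (0 : ℝ) < n := by
      have : (a : ℝ) ≤ n := by exact_mod_cast hn
      linarith
    obtain ⟨ζ, h1, h2, h3⟩ := fdiffs_mvt (l ++ List.replicate j 1) (phase c θ)
      (hasDerivAt_phase c θ) n hn0
    refine ⟨ζ, h1, ?_, ?_⟩
    · rw [List.sum_append, List.sum_replicate] at h2
      simpa using h2
    · simp only [hD]
      rw [h3, List.prod_append, List.prod_replicate, List.length_append, List.length_replicate,
        hl, hT', one_pow, mul_one, pow_add]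
      field_simp
  set L := ⌊η * N⌋₊ with hLdef
  have hηN1 : 1 ≤ η * N := by linarith
  have hL1 : 1 ≤ L := Nat.le_floor (by simpa using hηN1)
  have hLle : (L : ℝ) ≤ η * N := Nat.floor_le (by positivity)
  have hLge : η * N / 2 ≤ L := by
    have h1 := Nat.lt_floor_add_one (η * N)
    have h2 : (1 : ℝ) ≤ L := by exact_mod_cast hL1
    linarith
  have hηN4 : η * N ≤ N / 4 := by nlinarith
  set E := C * ((N : ℝ) * T' ^ (-κ) / (β / 2) ^ 2) with hE
  have hE0 : 0 ≤ E := by positivity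
  have hblock : ∀ a' b', a ≤ a' → a' ≤ b' → b' ≤ b → b' - a' ≤ L →
      ‖∑ n ∈ Ico a' b', eC (fdiffs l (phase c θ 0) n)‖ ≤ E := by
    intro a' b' h1 h2 h3 h4
    rcases h2.eq_or_lt with rfl | h2'
    · simpa using hE0
    have ca : (a : ℝ) ≤ a' := by exact_mod_cast h1
    have ca' : (a' : ℝ) ≤ N := by
      have : a' ≤ N := by omega
      exact_mod_cast this
    have cb : (b' : ℝ) - a' ≤ L := by
      rw [← Nat.cast_sub h2]; exact_mod_cast h4
    obtain ⟨r, hr, hrlow⟩ := hlow N T a' θ hNp hT hθ' (by linarith) (by linarith)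
    have hrm : (r : ℝ) + 1 ≤ m := by exact_mod_cast hr
    have hbd : ∀ j ≤ m + 2, (j : ℝ) ≤ m + 2 → ∀ n ∈ Ico a' b', |D j n| ≤ B := by
      intro j hj hj' n hn
      obtain ⟨hn1, hn2⟩ := mem_Ico.1 hn
      have cn : (a' : ℝ) ≤ n := by exact_mod_cast hn1
      have cn2 : (n : ℝ) ≤ N := by
        have : n ≤ N := by omega
        exact_mod_cast this
      obtain ⟨ζ, z1, z2, z3⟩ := hmvt j n (by omega)
      rw [z3]
      exact hup (Q + j) (by omega) N T ζ θ hNp hT hθ (by linarith) (by linarith)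
    have hnear : ∀ n ∈ Ico a' b', |D (r + 1) n
        - (N : ℝ) ^ (Q + 1 + r) / T * phase c θ (Q + 1 + r) a'| ≤ β / 2 := by
      intro n hn
      obtain ⟨hn1, hn2⟩ := mem_Ico.1 hn
      have cn : (a' : ℝ) ≤ n := by exact_mod_cast hn1
      have cn2 : (n : ℝ) + 1 ≤ b' := by exact_mod_cast hn2
      obtain ⟨ζ, z1, z2, z3⟩ := hmvt (r + 1) n (by omega)
      rw [Nat.cast_add, Nat.cast_one] at z2
      have hζ : ζ - a' ≤ 2 * (η * N) := by linarith
      rw [z3, show Q + (r + 1) = Q + 1 + r by ring]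
      set k := Q + 1 + r with hk
      have hlip := (convex_Icc (a' : ℝ) ζ).norm_image_sub_le_of_norm_hasDerivWithin_le
        (f := fun t => (N : ℝ) ^ k / T * phase c θ k t)
        (f' := fun t => (N : ℝ) ^ k / T * phase c θ (k + 1) t) (C := B / N)
        (fun t ht => ((hasDerivAt_phase c θ k t (by linarith [ht.1])).const_mul _).hasDerivWithinAt)
        (fun t ht => by
          have := hup (k + 1) (by omega) N T t θ hNp hT hθ (by linarith [ht.1])
            (by linarith [ht.2])
          rw [le_div_iff₀ hNp, Real.norm_eq_abs]
          calc _ = |(N : ℝ) ^ (k + 1) / T * phase c θ (k + 1) t| := by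
                rw [show (N : ℝ) ^ (k + 1) / T * phase c θ (k + 1) t
                  = (N : ℝ) ^ k / T * phase c θ (k + 1) t * N by ring]
                rw [abs_mul _ (N : ℝ), abs_of_pos hNp]
            _ ≤ B := this)
        (Set.left_mem_Icc.2 (by linarith)) (Set.right_mem_Icc.2 (by linarith))
      rw [Real.norm_eq_abs, Real.norm_eq_abs, abs_of_nonneg (by linarith : 0 ≤ ζ - a')] at hlip
      refine hlip.trans ?_
      calc B / N * (ζ - a') ≤ B / N * (2 * (η * N)) := by gcongr
        _ = 2 * (η * B) := by field_simp
        _ = β / 2 := by rw [hηB]; ring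
    have := hosc r hr N T' (β / 2) D a' b' h2 hT'1 (by
        rw [le_div_iff₀ (by positivity)]
        calc T' * (2 * B) ≤ η * N * (2 * B) := by gcongr
          _ = 2 * (η * B) * N := by ring
          _ ≤ N := by rw [hηB]; nlinarith) (by positivity) (by linarith) hDrec (by linarith)
        (fun n hn => ⟨hbd 1 (by omega) (by push_cast; linarith) n hn,
          hbd 2 (by omega) (by push_cast; linarith) n hn⟩) (by
        rcases le_abs.1 hrlow with h | h
        · left
          intro n hn
          have := (abs_le.1 (hnear n hn)).1
          linarith
        · right
          intro n hn
          have := (abs_le.1 (hnear n hn)).2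
          linarith)
    simpa only [hD0] using this
  refine (norm_sum_le_blocks _ L hL1 E hE0 a b hab hblock).trans ?_
  have hcount : ((b : ℝ) - a) / L + 1 ≤ 2 / η + 1 := by
    have hbaN : (b : ℝ) - a ≤ N := by
      have h1 : (1 : ℝ) ≤ a := by
        have : 1 ≤ a := by omega
        exact_mod_cast this
      linarith
    have : ((b : ℝ) - a) / L ≤ 2 / η := by
      rw [div_le_div_iff₀ (by exact_mod_cast hL1 : (0 : ℝ) < L) hη0]
      nlinarith
    linarith
  calc _ ≤ (2 / η + 1) * E := by gcongr
    _ = _ := by rw [hE]; field_simp; ring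

lemma list_bounds (lo hi : ℝ) (h0 : 0 ≤ lo) (hlh : 0 ≤ hi) (l : List ℕ)
    (h : ∀ x ∈ l, lo ≤ (x : ℝ) ∧ (x : ℝ) ≤ hi) :
    lo ^ l.length ≤ (l.prod : ℝ) ∧ (l.prod : ℝ) ≤ hi ^ l.length ∧
      (l.sum : ℝ) ≤ l.length * hi := by
  induction l with
  | nil => simp
  | cons x l ih =>
    obtain ⟨i1, i2, i3⟩ := ih (fun y hy => h y (List.mem_cons_of_mem _ hy))
    obtain ⟨x1, x2⟩ := h x List.mem_cons_self
    rw [List.prod_cons, List.sum_cons, List.length_cons, Nat.cast_mul, Nat.cast_add, pow_succ',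
      pow_succ']
    refine ⟨mul_le_mul x1 i1 (by positivity) (by positivity),
      mul_le_mul x2 i2 (by positivity) hlh, ?_⟩
    rw [Nat.cast_add, Nat.cast_one]
    linarith

lemma eventually_rpow_neg_le (e ε : ℝ) (he : 0 < e) (hε : 0 < ε) :
    ∀ᶠ N : ℕ in atTop, (N : ℝ) ^ (-e) ≤ ε :=
  ((tendsto_rpow_neg_atTop he).comp tendsto_natCast_atTop_atTop).eventually_le_const hε

set_option maxHeartbeats 1000000 in
/-- Phases of size `T` between `N^{3/4}` and a fixed power of `N`: Weyl differencing with shifts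
of size about `N (N^{1/2}/T)^{1/Q}` brings the size of the phase down to between `N^{1/4}` and
`N^{1/2}`, where `diff_bound` applies. -/
lemma large_phase_bound {m : ℕ} (c : Fin m → ℝ) (hc : Function.Injective c)
    (hint : ∀ i, ∀ k : ℤ, c i ≠ (k : ℝ)) (A : ℕ) (hA : 1 ≤ A) :
    ∃ C : ℝ, 1 ≤ C ∧ ∃ κ : ℝ, 0 < κ ∧ κ ≤ 1 ∧ ∃ N₀ : ℕ,
    ∀ (N : ℕ) (T : ℝ) (θ : Fin m → ℝ) (a b : ℕ), N₀ ≤ N → 1 ≤ N →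
      (N : ℝ) ^ (3 / 4 : ℝ) ≤ T → T ≤ (N : ℝ) ^ (A : ℝ) →
      (∀ i, |θ i| * (N : ℝ) ^ (c i) ≤ T) → (∃ i, |θ i| * (N : ℝ) ^ (c i) = T) →
      a ≤ b → N ≤ 2 * a → b ≤ N + 1 →
      ‖∑ n ∈ Ico a b, eC (phase c θ 0 n)‖ ≤ C * (N * (N : ℝ) ^ (-κ)) := by
  set Q := 2 * A with hQ
  obtain ⟨C, hC, κ, hκ, hκ1, η, hη, hdiff⟩ := diff_bound c hc hint Q
  have hQ2 : (2 : ℝ) ≤ Q := by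
    have : 2 ≤ Q := by omega
    exact_mod_cast this
  have hQA : (Q : ℝ) = 2 * A := by rw [hQ]; push_cast; ring
  have hQ0 : (0 : ℝ) < Q := by linarith
  set p : ℝ := (1 / 2 : ℝ) ^ Q with hp
  have hp0 : 0 < p := by positivity
  have hp1 : p ≤ 1 := pow_le_one₀ (by norm_num) (by norm_num)
  set s : ℝ := 1 / (8 * Q) with hs
  have hs0 : 0 < s := by positivity
  have hs1 : s ≤ 1 / 16 := by
    rw [hs]; apply one_div_le_one_div_of_le <;> linarith
  have hsQ : s * Q = 1 / 8 := by rw [hs]; field_simp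
  set ω := min (κ / 4) s with hω
  have hω0 : 0 < ω := lt_min (by linarith) hs0
  have hω1 : ω ≤ 1 := (min_le_right _ _).trans (by linarith)
  have E1 := eventually_rpow_neg_le (2 * s) (η / (Q + m + 1)) (by positivity) (by positivity)
  have E2 := eventually_rpow_neg_le (1 / 2) η (by norm_num) hη
  have E3 := eventually_rpow_neg_le (1 / 8) ((1 / 2) ^ Q) (by norm_num) (by positivity)
  have E4 := eventually_rpow_neg_le (κ / 4) (1 / (2 * C)) (by positivity) (by positivity)
  have E5 := eventually_rpow_neg_le s (1 / 2) hs0 (by norm_num)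
  obtain ⟨N₀, hN₀⟩ := eventually_atTop.1 (E1.and (E2.and (E3.and (E4.and E5))))
  refine ⟨10 * (C + 1), by linarith, ω * p, by positivity, mul_le_one₀ hω1 hp0.le hp1, N₀, ?_⟩
  intro N T θ a b hNN hN1 hTl hTu hθ hθ' hab hNa hbN
  obtain ⟨e1, e2, e3, e4, e5⟩ := hN₀ N hNN
  have hx1 : (1 : ℝ) ≤ N := by exact_mod_cast hN1
  set x : ℝ := (N : ℝ) with hx
  have hx0 : 0 < x := by linarith
  have hT0 : 0 < T := lt_of_lt_of_le (by positivity) hTl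
  -- the shift length, before rounding
  set H' : ℝ := x * (x ^ (1 / 2 : ℝ) / T) ^ (1 / (Q : ℝ)) with hH'
  have hH'Q : H' ^ Q = x ^ Q * (x ^ (1 / 2 : ℝ) / T) := by
    rw [hH', mul_pow, ← Real.rpow_natCast ((x ^ (1 / 2 : ℝ) / T) ^ (1 / (Q : ℝ))) Q,
      ← Real.rpow_mul (by positivity), one_div_mul_cancel hQ0.ne', Real.rpow_one]
  have hH'u : H' ≤ x * x ^ (-(2 * s)) := by
    rw [hH']
    gcongr
    calc (x ^ (1 / 2 : ℝ) / T) ^ (1 / (Q : ℝ)) ≤ (x ^ (-(1 / 4) : ℝ)) ^ (1 / (Q : ℝ)) := by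
          gcongr
          rw [div_le_iff₀ hT0]
          calc x ^ (1 / 2 : ℝ) = x ^ (-(1 / 4) : ℝ) * x ^ (3 / 4 : ℝ) := by
                rw [← Real.rpow_add hx0]; norm_num
            _ ≤ _ := by gcongr
      _ = x ^ (-(2 * s)) := by
          rw [← Real.rpow_mul hx0.le, hs]; congr 1; field_simp; norm_num
  have hH'l : x ^ (1 / 2 : ℝ) ≤ H' := by
    rw [hH']
    calc x ^ (1 / 2 : ℝ) = x * (x ^ (-(A : ℝ))) ^ (1 / (Q : ℝ)) := by
          rw [← Real.rpow_mul hx0.le, ← Real.rpow_one_add' hx0.le]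
          · congr 1; rw [hQA]; field_simp; norm_num
          · rw [hQA]; field_simp; norm_num
      _ ≤ _ := by
          gcongr
          rw [le_div_iff₀ hT0]
          calc x ^ (-(A : ℝ)) * T ≤ x ^ (-(A : ℝ)) * x ^ (A : ℝ) := by gcongr
            _ = 1 := by rw [← Real.rpow_add hx0]; simp
            _ ≤ _ := Real.one_le_rpow hx1 (by norm_num)
  have hH'1 : 1 ≤ H' := (Real.one_le_rpow hx1 (by norm_num)).trans hH'l
  have hH'x : H' ≤ x := by
    refine hH'u.trans ?_
    have : x ^ (-(2 * s)) ≤ 1 := Real.rpow_le_one_of_one_le_of_nonpos hx1 (by linarith)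
    nlinarith
  set H := ⌊H'⌋₊ with hH
  have hH1 : 1 ≤ H := Nat.le_floor (by simpa using hH'1)
  have hHle : (H : ℝ) ≤ H' := Nat.floor_le (by linarith)
  have hHge : H' / 2 ≤ H := by
    have h1 := Nat.lt_floor_add_one H'
    have h2 : (1 : ℝ) ≤ H := by exact_mod_cast hH1
    linarith
  set σ := x ^ (-s) with hσ
  have hσ0 : 0 < σ := by positivity
  have hσQ : σ ^ Q = x ^ (-(1 / 8) : ℝ) := by
    rw [hσ, ← Real.rpow_mul_natCast hx0.le, neg_mul, hsQ]
  have h8 : 2 ≤ x ^ (1 / 8 : ℝ) := by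
    have h1 : x ^ (-(1 / 8) : ℝ) ≤ 1 / 2 :=
      e3.trans (pow_le_of_le_one (by norm_num) (by norm_num) (by omega))
    have h2 : x ^ (-(1 / 8) : ℝ) * x ^ (1 / 8 : ℝ) = 1 := by
      rw [← Real.rpow_add hx0]; simp
    have h3 : 0 < x ^ (1 / 8 : ℝ) := by positivity
    have h4 : x ^ (-(1 / 8) : ℝ) * x ^ (1 / 8 : ℝ) ≤ 1 / 2 * x ^ (1 / 8 : ℝ) := by gcongr
    linarith
  have hσH : 1 ≤ σ * H := by
    have h1 : x ^ (1 / 8 : ℝ) ≤ σ * H' := by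
      calc x ^ (1 / 8 : ℝ) ≤ x ^ (-s + 1 / 2) :=
            Real.rpow_le_rpow_of_exponent_le hx1 (by linarith)
        _ = σ * x ^ (1 / 2 : ℝ) := by rw [Real.rpow_add hx0]
        _ ≤ σ * H' := by gcongr
    have h2 : σ * (H' / 2) ≤ σ * H := by gcongr
    linarith
  set X := C * x ^ (-(κ / 4)) + σ with hX
  have hX1 : X ≤ 1 := by
    have h1 : C * x ^ (-(κ / 4)) ≤ C * (1 / (2 * C)) := by gcongr
    have h2 : C * (1 / (2 * C)) = 1 / 2 := by field_simp
    linarith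
  have hσX : σ ≤ X := by
    have : 0 ≤ C * x ^ (-(κ / 4)) := by positivity
    linarith
  have hbaN : (b : ℝ) - a ≤ x := by
    have h1 : b ≤ N + a := by omega
    have h2 : (b : ℝ) ≤ N + a := by exact_mod_cast h1
    linarith
  have hW := weyl_diff x σ X H hH1 (hHle.trans hH'x) hσH hσX hX1 Q
    (fun n => phase c θ 0 n) a b hab hbaN (by
      intro l hl hlh a' b' h1 h2 h3
      obtain ⟨b1, b2, b3⟩ := list_bounds (σ * H) H (by positivity) (by positivity) l
        (fun y hy => ⟨(hlh y hy).1, by exact_mod_cast (hlh y hy).2.le⟩)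
      rw [hl] at b1 b2 b3
      set T' := T * l.prod / x ^ Q with hT'
      have t1 : T' ≤ x ^ (1 / 2 : ℝ) := by
        rw [hT', div_le_iff₀ (by positivity)]
        calc T * l.prod ≤ T * H' ^ Q := by
              gcongr
              exact b2.trans (by gcongr)
          _ = _ := by rw [hH'Q]; field_simp
      have t2 : x ^ (1 / 4 : ℝ) ≤ T' := by
        rw [hT', le_div_iff₀ (by positivity)]
        calc x ^ (1 / 4 : ℝ) * x ^ Q
            = (x ^ (-(1 / 8) : ℝ) * x ^ (-(1 / 8) : ℝ) * x ^ (1 / 2 : ℝ)) * x ^ Q := by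
              rw [← Real.rpow_add hx0, ← Real.rpow_add hx0]; norm_num
          _ ≤ (x ^ (-(1 / 8) : ℝ) * (1 / 2) ^ Q * x ^ (1 / 2 : ℝ)) * x ^ Q := by gcongr
          _ = T * (σ * (H' / 2)) ^ Q := by
              rw [mul_pow, div_pow H', hH'Q, hσQ, div_pow, one_pow]; field_simp
          _ ≤ T * (σ * H) ^ Q := by gcongr
          _ ≤ T * l.prod := by gcongr
      have t3 : 1 ≤ T' := (Real.one_le_rpow hx1 (by norm_num)).trans t2
      have := hdiff N T T' θ l a' b' hN1 hT0 hθ hθ' hl hT' t3 (by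
          refine t1.trans ?_
          calc x ^ (1 / 2 : ℝ) = x ^ (-(1 / 2) : ℝ) * x := by
                rw [← Real.rpow_add_one hx0.ne']; norm_num
            _ ≤ η * x := by gcongr) (by
          have g1 : (l.sum : ℝ) ≤ Q * (x * x ^ (-(2 * s))) :=
            b3.trans (by gcongr; exact hHle.trans hH'u)
          have g2 : (m : ℝ) + 1 ≤ (m + 1) * (x * x ^ (-(2 * s))) := by
            have : 1 ≤ x * x ^ (-(2 * s)) := hH'1.trans hH'u
            nlinarith [(Nat.cast_nonneg m : (0 : ℝ) ≤ m)]
          have g3 : x * ((Q + m + 1) * x ^ (-(2 * s))) ≤ x * η := by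
            gcongr
            rw [le_div_iff₀ (by positivity)] at e1
            linarith
          linarith) h2 (by omega) (by omega)
      refine this.trans ?_
      calc C * (x * T' ^ (-κ)) ≤ C * (x * (x ^ (1 / 4 : ℝ)) ^ (-κ)) := by
            gcongr C * (x * ?_)
            exact Real.rpow_le_rpow_of_nonpos (by positivity) t2 (by linarith)
        _ = C * x ^ (-(κ / 4)) * x := by
            rw [← Real.rpow_mul hx0.le, show (1 / 4 : ℝ) * -κ = -(κ / 4) by ring]; ring
        _ ≤ X * x := by gcongr; linarith)
  refine hW.trans ?_
  have hXω : X ≤ (C + 1) * x ^ (-ω) := by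
    have g1 : x ^ (-(κ / 4)) ≤ x ^ (-ω) :=
      Real.rpow_le_rpow_of_exponent_le hx1 (neg_le_neg (min_le_left _ _))
    have g2 : σ ≤ x ^ (-ω) :=
      Real.rpow_le_rpow_of_exponent_le hx1 (neg_le_neg (min_le_right _ _))
    have : C * x ^ (-(κ / 4)) ≤ C * x ^ (-ω) := by gcongr
    linarith
  have hX0 : 0 ≤ X := by positivity
  have : X ^ p ≤ (C + 1) * x ^ (-(ω * p)) := by
    calc X ^ p ≤ ((C + 1) * x ^ (-ω)) ^ p := by gcongr
      _ = (C + 1) ^ p * x ^ (-(ω * p)) := by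
          rw [Real.mul_rpow (by linarith) (by positivity), ← Real.rpow_mul hx0.le, neg_mul]
      _ ≤ _ := by
          gcongr
          exact Real.rpow_le_self_of_one_le (by linarith) hp1
  calc 10 * X ^ p * x ≤ 10 * ((C + 1) * x ^ (-(ω * p))) * x := by gcongr
    _ = _ := by ring

/-- Power saving for `∑ e(θ₁ n^{c₁} + ⋯ + θ_m n^{c_m})` over subintervals of `[N/2, N]`, when
some `θ_i N^{c_i}` is at least `τ`. -/
lemma smooth_bound {m : ℕ} (c : Fin m → ℝ) (hc : Function.Injective c)
    (hint : ∀ i, ∀ k : ℤ, c i ≠ (k : ℝ)) :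
    ∃ C : ℝ, 1 ≤ C ∧ ∃ κ : ℝ, 0 < κ ∧ κ ≤ 1 ∧
    ∀ (N : ℕ) (θ : Fin m → ℝ) (a b : ℕ) (i : Fin m) (τ : ℝ), 1 ≤ N →
      (∀ i, |θ i| ≤ 2 * N) → a ≤ b → N ≤ 2 * a → b ≤ N + 1 →
      1 ≤ τ → τ ≤ |θ i| * (N : ℝ) ^ (c i) →
      ‖∑ n ∈ Ico a b, eC (∑ i, θ i * (n : ℝ) ^ (c i))‖
        ≤ C * (N * ((N : ℝ) ^ (-κ) + τ ^ (-κ))) := by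
  obtain ⟨A, hA1, hA⟩ : ∃ A : ℕ, 1 ≤ A ∧ ∀ i, c i + 2 ≤ A := by
    obtain ⟨A, hA⟩ := exists_nat_ge (∑ i, |c i| + 2)
    refine ⟨A + 1, by omega, fun i => ?_⟩
    have := single_le_sum (f := fun i => |c i|) (fun i _ => abs_nonneg _) (mem_univ i)
    have h2 := le_abs_self (c i)
    push_cast
    linarith
  obtain ⟨C₁, hC₁, κ₁, hκ₁, hκ₁1, η, hη, hdiff⟩ := diff_bound c hc hint 0
  obtain ⟨C₂, hC₂, κ₂, hκ₂, hκ₂1, N₀, hlarge⟩ := large_phase_bound c hc hint A hA1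
  have E1 := eventually_rpow_neg_le (1 / 4) η (by norm_num) hη
  have E2 := eventually_rpow_neg_le 1 (η / (m + 1)) (by norm_num) (by positivity)
  obtain ⟨N₁, hN₁⟩ := eventually_atTop.1 (E1.and E2)
  set N₂ := max (max N₀ N₁) 2 with hN₂
  have hN₂0 : (0 : ℝ) ≤ N₂ := Nat.cast_nonneg _
  refine ⟨C₁ + C₂ + N₂, by linarith, min κ₁ κ₂, lt_min hκ₁ hκ₂, (min_le_left _ _).trans hκ₁1, ?_⟩
  intro N θ a b i τ hN1 hθN hab hNa hbN hτ1 hτ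
  set κ := min κ₁ κ₂ with hκ
  have hκ0 : 0 < κ := lt_min hκ₁ hκ₂
  have hκ1 : κ ≤ 1 := (min_le_left _ _).trans hκ₁1
  have hx1 : (1 : ℝ) ≤ N := by exact_mod_cast hN1
  set x : ℝ := (N : ℝ) with hx
  have hx0 : 0 < x := by linarith
  have hbaN : (b : ℝ) - a ≤ x := by
    have h1 : b ≤ N + a := by omega
    have h2 : (b : ℝ) ≤ N + a := by exact_mod_cast h1
    linarith
  have hτκ : 0 ≤ τ ^ (-κ) := by positivity
  have hxκ : 0 ≤ x ^ (-κ) := by positivity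
  by_cases hsmall : N < N₂
  · refine (norm_sum_eC_le_card _ hab).trans (hbaN.trans ?_)
    have h1 : x ≤ N₂ := by rw [hx]; exact_mod_cast hsmall.le
    have h2 : 1 ≤ x * x ^ (-κ) := by
      calc 1 = x * x ^ (-1 : ℝ) := by rw [Real.rpow_neg_one, mul_inv_cancel₀ hx0.ne']
        _ ≤ _ := by gcongr
    have h3 : (N₂ : ℝ) * 1 ≤ N₂ * (x * (x ^ (-κ) + τ ^ (-κ))) := by
      gcongr
      nlinarith
    have h4 : 0 ≤ (C₁ + C₂) * (x * (x ^ (-κ) + τ ^ (-κ))) := by positivity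
    linarith
  push Not at hsmall
  obtain ⟨e1, e2⟩ := hN₁ N (by omega)
  obtain ⟨i₀, -, hi₀⟩ := exists_max_image univ (fun j => |θ j| * x ^ (c j)) ⟨i, mem_univ i⟩
  set T := |θ i₀| * x ^ (c i₀) with hT
  have hθT : ∀ j, |θ j| * x ^ (c j) ≤ T := fun j => hi₀ j (mem_univ j)
  have hτT : τ ≤ T := hτ.trans (hθT i)
  have hT0 : 0 < T := by linarith
  have hTA : T ≤ x ^ (A : ℝ) := by
    have hx2 : (2 : ℝ) ≤ x := by
      have : 2 ≤ N := by omega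
      rw [hx]; exact_mod_cast this
    calc T ≤ (x * x) * x ^ (c i₀) := by
          rw [hT]; gcongr; exact (hθN i₀).trans (by gcongr)
      _ = x ^ (c i₀ + 2) := by
          rw [Real.rpow_add hx0]; norm_num; ring
      _ ≤ _ := Real.rpow_le_rpow_of_exponent_le hx1 (hA i₀)
  have hph : ∀ n : ℕ, (∑ i, θ i * (n : ℝ) ^ (c i)) = phase c θ 0 n := by
    intro n; simp [phase]
  simp only [hph]
  rcases le_total T (x ^ (3 / 4 : ℝ)) with h34 | h34
  · have := hdiff N T T θ [] a b hN1 hT0 hθT ⟨i₀, rfl⟩ rfl (by simp) (by linarith) (by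
        refine h34.trans ?_
        calc x ^ (3 / 4 : ℝ) = x ^ (-(1 / 4) : ℝ) * x := by
              rw [← Real.rpow_add_one hx0.ne']; norm_num
          _ ≤ η * x := by gcongr) (by
        rw [Real.rpow_neg_one, le_div_iff₀ (by positivity), inv_mul_eq_div,
          div_le_iff₀ hx0] at e2
        simpa using e2) hab hNa hbN
    simp only [fdiffs] at this
    refine this.trans ?_
    have g : T ^ (-κ₁) ≤ τ ^ (-κ) :=
      (Real.rpow_le_rpow_of_nonpos (by linarith) hτT (by linarith)).trans
        (Real.rpow_le_rpow_of_exponent_le hτ1 (neg_le_neg (min_le_left _ _)))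
    gcongr
    · linarith
    · linarith
  · refine (hlarge N T θ a b (by omega) hN1 h34 hTA hθT ⟨i₀, rfl⟩ hab hNa hbN).trans ?_
    have g : x ^ (-κ₂) ≤ x ^ (-κ) :=
      Real.rpow_le_rpow_of_exponent_le hx1 (neg_le_neg (min_le_right _ _))
    gcongr
    · linarith
    · linarith

/-! ### Fejér kernels and the fractional parts -/

lemma eC_natCast_mul (l : ℕ) (y : ℝ) : eC (l * y) = eC y ^ l := by
  simp only [eC]
  rw [← Complex.exp_nat_mul]
  congr 1
  push_cast
  ring

lemma eC_sub_round (x : ℝ) : eC (x - round x) = eC x := by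
  rw [eC_sub, eC_int, map_one, mul_one]

lemma eC_ne_one {x : ℝ} (h0 : x ≠ 0) (h1 : |x| < 1) : eC x ≠ 1 := by
  intro h
  unfold eC at h
  obtain ⟨n, hn⟩ := Complex.exp_eq_one_iff.1 h
  have h2 : (x : ℂ) = n := by
    have := Complex.two_pi_I_ne_zero
    refine mul_right_cancel₀ this ?_
    rw [← hn]; ring
  have h3 : x = n := by exact_mod_cast h2
  rw [h3] at h0 h1
  have h4 : |n| < 1 := by exact_mod_cast h1
  rw [Int.abs_lt_one_iff] at h4
  simp [h4] at h0

/-- The Fejér kernel on `ℝ/ℤ`, normalised so that its value at `0` is `1`. -/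
def fejer (K : ℕ) (y : ℝ) : ℝ := ‖∑ l ∈ range K, eC (l * y)‖ ^ 2 / (K : ℝ) ^ 2

lemma fejer_nonneg (K : ℕ) (y : ℝ) : 0 ≤ fejer K y := by unfold fejer; positivity

lemma fejer_eq (K : ℕ) (y : ℝ) : (fejer K y : ℂ) =
    ∑ q ∈ range K ×ˢ range K, 1 / (K : ℂ) ^ 2 * eC (((q.1 : ℝ) - q.2) * y) := by
  unfold fejer
  rw [← mul_sum, sum_product]
  push_cast
  rw [← Complex.mul_conj', map_sum, sum_mul_sum, div_eq_mul_one_div, mul_comm]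
  congr 1
  refine sum_congr rfl fun l _ => sum_congr rfl fun l' _ => ?_
  rw [sub_mul, eC_sub]

lemma fejer_sum (K : ℕ) (hK : 1 ≤ K) (x : ℝ) : ∑ j ∈ range K, fejer K (x - j / K) = 1 := by
  have hK0 : (K : ℝ) ≠ 0 := by positivity
  have hK0' : (K : ℂ) ≠ 0 := by exact_mod_cast hK0
  have key : ∀ q ∈ range K ×ˢ range K, ∑ j ∈ range K, 1 / (K : ℂ) ^ 2 *
      eC (((q.1 : ℝ) - q.2) * (x - (j : ℝ) / K)) = if q.1 = q.2 then 1 / (K : ℂ) else 0 := by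
    intro q hq
    obtain ⟨q1, q2⟩ := mem_product.1 hq
    rw [mem_range] at q1 q2
    rw [← mul_sum]
    split_ifs with h
    · simp only [h, sub_self, zero_mul, eC_zero, sum_const, card_range, nsmul_eq_mul, mul_one]
      field_simp
    · have h1 : ∀ j : ℕ, eC (((q.1 : ℝ) - q.2) * (x - (j : ℝ) / K)) =
          eC (((q.1 : ℝ) - q.2) * x) * eC (((q.2 : ℝ) - q.1) / K) ^ j := by
        intro j
        rw [← eC_natCast_mul, ← eC_add]
        congr 1; ring
      simp only [h1]
      rw [← mul_sum]
      have hr : eC (((q.2 : ℝ) - q.1) / K) ≠ 1 := by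
        apply eC_ne_one
        · rw [div_ne_zero_iff]
          refine ⟨?_, hK0⟩
          rw [sub_ne_zero]
          exact_mod_cast Ne.symm h
        · rw [abs_div, Nat.abs_cast, div_lt_one (by positivity), abs_sub_lt_iff]
          have c1 : (q.1 : ℝ) < K := by exact_mod_cast q1
          have c2 : (q.2 : ℝ) < K := by exact_mod_cast q2
          have c3 : (0 : ℝ) ≤ q.1 := Nat.cast_nonneg _
          have c4 : (0 : ℝ) ≤ q.2 := Nat.cast_nonneg _
          constructor <;> linarith
      rw [geom_sum_eq hr, ← eC_natCast_mul]
      have : eC ((K : ℝ) * (((q.2 : ℝ) - q.1) / K)) = 1 := by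
        rw [mul_div_cancel₀ _ hK0]
        have := eC_int ((q.2 : ℤ) - q.1)
        push_cast at this
        exact this
      rw [this]; simp
  have : ((∑ j ∈ range K, fejer K (x - j / K) : ℝ) : ℂ) = 1 := by
    push_cast
    simp only [fejer_eq]
    rw [sum_comm, sum_congr rfl key, sum_product]
    simp only [sum_ite_eq, mem_range]
    rw [sum_congr rfl (fun l hl => by rw [if_pos (mem_range.1 hl)])]
    rw [sum_const, card_range, nsmul_eq_mul]
    field_simp
  exact_mod_cast this

lemma fejer_le (K : ℕ) (y d : ℝ) (hd : 0 < d) (hy : d ≤ |y - round y|) :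
    fejer K y ≤ 1 / (4 * (K : ℝ) ^ 2 * d ^ 2) := by
  have h1 : 4 * d ≤ ‖eC y - 1‖ := by
    have := norm_eC_sub_one_ge (x := y - round y) (abs_sub_round y)
    rw [eC_sub_round] at this
    linarith
  have h2 : ‖∑ l ∈ range K, eC (l * y)‖ * ‖eC y - 1‖ ≤ 2 := by
    simp only [eC_natCast_mul]
    rw [← norm_mul, geom_sum_mul, ← eC_natCast_mul]
    refine (norm_sub_le _ _).trans ?_
    rw [norm_eC, norm_one]; norm_num
  set u := ‖∑ l ∈ range K, eC (l * y)‖ with hu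
  have hu0 : 0 ≤ u := norm_nonneg _
  have h3 : u * d ≤ 1 / 2 := by nlinarith
  have h4 : u ^ 2 ≤ 1 / (4 * d ^ 2) := by
    rw [le_div_iff₀ (by positivity)]
    have : 0 ≤ u * d := by positivity
    nlinarith
  calc fejer K y = u ^ 2 / (K : ℝ) ^ 2 := rfl
    _ ≤ 1 / (4 * d ^ 2) / (K : ℝ) ^ 2 := by gcongr
    _ = _ := by rw [div_div]; ring_nf

lemma fejer_ge (M : ℕ) (hM : 1 ≤ M) (x : ℝ) (hx : |x - round x| ≤ 1 / (8 * M)) :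
    1 / 4 ≤ fejer M x := by
  have hM0 : (0 : ℝ) < M := by exact_mod_cast hM
  set y := x - round x with hy
  have h1 : ∀ l ∈ range M, 1 / 2 ≤ (eC (l * x)).re := by
    intro l hl
    have hl' : (l : ℝ) ≤ M := by exact_mod_cast (mem_range.1 hl).le
    have e : eC (l * x) = eC (l * y) := by
      rw [eC_natCast_mul, eC_natCast_mul, hy, eC_sub_round]
    have hly : |l * y| ≤ 1 / 8 := by
      rw [abs_mul, Nat.abs_cast]
      calc (l : ℝ) * |y| ≤ M * (1 / (8 * M)) := by gcongr
        _ = 1 / 8 := by field_simp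
    rw [e, eC, show 2 * Real.pi * Complex.I * ((l * y : ℝ) : ℂ)
      = ((2 * Real.pi * (l * y) : ℝ) : ℂ) * Complex.I by push_cast; ring,
      Complex.exp_ofReal_mul_I_re]
    have h2 := Real.one_sub_sq_div_two_le_cos (x := 2 * Real.pi * (l * y))
    have h3 : |2 * Real.pi * (l * y)| ≤ 1 := by
      rw [abs_mul, abs_of_pos (by positivity : 0 < 2 * Real.pi)]
      nlinarith [Real.pi_lt_four, Real.pi_pos]
    have h4 : (2 * Real.pi * (l * y)) ^ 2 ≤ 1 := by
      rw [← sq_abs]; exact pow_le_one₀ (abs_nonneg _) h3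
    linarith
  have h2 : (M : ℝ) / 2 ≤ ‖∑ l ∈ range M, eC (l * x)‖ := by
    refine le_trans ?_ (Complex.re_le_norm _)
    rw [Complex.re_sum]
    have := card_nsmul_le_sum (range M) (fun l => (eC ((l : ℝ) * x)).re) (1 / 2) h1
    rw [card_range, nsmul_eq_mul] at this
    linarith
  unfold fejer
  rw [le_div_iff₀ (by positivity)]
  calc 1 / 4 * (M : ℝ) ^ 2 = (M / 2 : ℝ) ^ 2 := by ring
    _ ≤ _ := by gcongr

/-- The factor `e(-ξ {x})` that converts `e(ξ x)` into `e(ξ ⌊x⌋)`. -/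
def fracPhase (ξ x : ℝ) : ℂ := eC (-(ξ * Int.fract x))

lemma norm_fracPhase (ξ x : ℝ) : ‖fracPhase ξ x‖ = 1 := norm_eC _

/-- Trigonometric polynomial approximating `fracPhase ξ`. -/
def fracApprox (ξ : ℝ) (K : ℕ) (x : ℝ) : ℂ :=
  ∑ j ∈ range K, fracPhase ξ (j / K) * fejer K (x - j / K)

/-- The coefficients of `fracApprox`, indexed by pairs `q` contributing to the frequency
`q.1 - q.2`. -/
def fracCoef (ξ : ℝ) (K : ℕ) (q : ℕ × ℕ) : ℂ :=
  1 / (K : ℂ) ^ 2 * ∑ j ∈ range K, fracPhase ξ (j / K) * eC (-(((q.1 : ℝ) - q.2) * (j / K)))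

lemma norm_fracApprox_le (ξ : ℝ) (K : ℕ) (hK : 1 ≤ K) (x : ℝ) : ‖fracApprox ξ K x‖ ≤ 1 := by
  rw [← fejer_sum K hK x]
  refine norm_sum_le_of_le _ fun j _ => ?_
  rw [norm_mul, norm_fracPhase, one_mul, Complex.norm_real, Real.norm_eq_abs,
    abs_of_nonneg (fejer_nonneg _ _)]

lemma fracApprox_eq (ξ : ℝ) (K : ℕ) (x : ℝ) : fracApprox ξ K x =
    ∑ q ∈ range K ×ˢ range K, fracCoef ξ K q * eC (((q.1 : ℝ) - q.2) * x) := by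
  unfold fracApprox fracCoef
  simp only [fejer_eq, mul_sum, sum_mul]
  rw [sum_comm]
  refine sum_congr rfl fun q _ => sum_congr rfl fun j _ => ?_
  rw [mul_sub, sub_eq_add_neg, eC_add]
  ring

lemma norm_fracCoef_le (ξ : ℝ) (K : ℕ) (hK : 1 ≤ K) (q : ℕ × ℕ) :
    ‖fracCoef ξ K q‖ ≤ 1 / K := by
  have hK0 : (0 : ℝ) < K := by exact_mod_cast hK
  unfold fracCoef
  rw [norm_mul]
  have h1 : ‖∑ j ∈ range K, fracPhase ξ (j / K) * eC (-(((q.1 : ℝ) - q.2) * (j / K)))‖ ≤ K := by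
    refine (norm_sum_le_of_le (f := _) (n := fun _ => (1 : ℝ)) _ fun j _ => ?_).trans ?_
    · rw [norm_mul, norm_fracPhase, norm_eC, one_mul]
    · simp
  have h2 : ‖1 / (K : ℂ) ^ 2‖ = 1 / (K : ℝ) ^ 2 := by simp
  rw [h2]
  calc _ ≤ 1 / (K : ℝ) ^ 2 * K := by gcongr
    _ = _ := by field_simp

/-- Away from the integers, where `fracPhase` jumps, the approximation is good: nodes `j / K` within
`δ` of `x` are handled by the Lipschitz bound, the others by the decay of the Fejér kernel. -/
lemma norm_fracPhase_sub_fracApprox_le (ξ : ℝ) (hξ : |ξ| ≤ 1 / 2) (K : ℕ) (hK : 1 ≤ K)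
    (x δ : ℝ) (hδ : 0 < δ) (hx : δ < |x - round x|) :
    ‖fracPhase ξ x - fracApprox ξ K x‖ ≤ Real.pi * δ + 1 / (2 * K * δ ^ 2) := by
  have hK0 : (0 : ℝ) < K := by exact_mod_cast hK
  have e1 : fracPhase ξ x - fracApprox ξ K x =
      ∑ j ∈ range K, (fracPhase ξ x - fracPhase ξ (j / K)) * fejer K (x - j / K) := by
    have h1 : (1 : ℂ) = ∑ j ∈ range K, (fejer K (x - j / K) : ℂ) := by
      have := fejer_sum K hK x
      exact_mod_cast this.symm
    simp only [sub_mul, sum_sub_distrib]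
    rw [← mul_sum, ← h1, mul_one, fracApprox]
  rw [e1]
  have e2 : ∀ j ∈ range K, ‖(fracPhase ξ x - fracPhase ξ (j / K)) * fejer K (x - j / K)‖ ≤
      Real.pi * δ * fejer K (x - j / K) + 2 * (1 / (4 * (K : ℝ) ^ 2 * δ ^ 2)) := by
    intro j hj
    have hj' : (j : ℝ) < K := by exact_mod_cast mem_range.1 hj
    have hjK0 : 0 ≤ (j : ℝ) / K := by positivity
    have hjK1 : (j : ℝ) / K < 1 := by rwa [div_lt_one hK0]
    have hF0 := fejer_nonneg K (x - j / K)
    rw [norm_mul, Complex.norm_real, Real.norm_eq_abs, abs_of_nonneg hF0]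
    by_cases hfar : δ ≤ |x - (j : ℝ) / K - round (x - (j : ℝ) / K)|
    · have g1 := fejer_le K _ δ hδ hfar
      have g2 : ‖fracPhase ξ x - fracPhase ξ (j / K)‖ ≤ 2 := by
        refine (norm_sub_le _ _).trans ?_
        rw [norm_fracPhase, norm_fracPhase]; norm_num
      have g3 : 0 ≤ Real.pi * δ * fejer K (x - j / K) := by positivity
      have g4 := mul_le_mul g2 g1 hF0 (by norm_num)
      linarith
    · push Not at hfar
      have f1 : δ < Int.fract x := by
        have h := hx.trans_le (round_le x ⌊x⌋)
        rwa [show x - (⌊x⌋ : ℝ) = Int.fract x from rfl, abs_of_nonneg (Int.fract_nonneg x)] at h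
      have f2 : Int.fract x < 1 - δ := by
        have h := hx.trans_le (round_le x (⌊x⌋ + 1))
        push_cast at h
        have e : x - ((⌊x⌋ : ℝ) + 1) = Int.fract x - 1 := by rw [Int.fract]; ring
        rw [e, abs_of_neg (by linarith [Int.fract_lt_one x])] at h
        linarith
      -- the integer nearest to `x - j/K` is `⌊x⌋`, as `{x}` stays away from `0` and `1`
      set n := round (x - (j : ℝ) / K) with hn
      obtain ⟨l1, l2⟩ := abs_lt.1 hfar
      have hxf : x = ⌊x⌋ + Int.fract x := (Int.floor_add_fract x).symm
      have n1 : (n : ℝ) < ⌊x⌋ + 1 := by linarith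
      have n2 : (⌊x⌋ : ℝ) - 1 < n := by linarith
      have n3 : n = ⌊x⌋ := by
        have m1 : n < ⌊x⌋ + 1 := by exact_mod_cast n1
        have m2 : ⌊x⌋ - 1 < n := by exact_mod_cast n2
        omega
      have g1 : |Int.fract x - j / K| ≤ δ := by
        rw [n3] at hfar
        rw [show Int.fract x - (j : ℝ) / K = x - j / K - ⌊x⌋ by rw [Int.fract]; ring]
        exact hfar.le
      have g2 : ‖fracPhase ξ x - fracPhase ξ (j / K)‖ ≤ Real.pi * δ := by
        unfold fracPhase
        refine (norm_eC_sub_le _ _).trans ?_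
        rw [Int.fract_eq_self.2 ⟨hjK0, hjK1⟩, show -(ξ * Int.fract x) - -(ξ * ((j : ℝ) / K))
          = -(ξ * (Int.fract x - j / K)) by ring, abs_neg, abs_mul]
        have : |ξ| * |Int.fract x - j / K| ≤ 1 / 2 * δ := by gcongr
        nlinarith [Real.pi_pos]
      have g3 : 0 ≤ 2 * (1 / (4 * (K : ℝ) ^ 2 * δ ^ 2)) := by positivity
      have g4 := mul_le_mul_of_nonneg_right g2 hF0
      linarith
  refine (norm_sum_le_of_le _ e2).trans ?_
  rw [sum_add_distrib, ← mul_sum, fejer_sum K hK, sum_const, card_range, nsmul_eq_mul, mul_one]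
  gcongr
  apply le_of_eq
  field_simp
  norm_num

/-- Pointwise approximation; the Fejér kernel majorises the exceptional set around the
discontinuities of `fracPhase ξ`. -/
lemma norm_fracPhase_sub_fracApprox_le' (ξ : ℝ) (hξ : |ξ| ≤ 1 / 2) (M : ℕ) (hM : 1 ≤ M)
    (x : ℝ) : ‖fracPhase ξ x - fracApprox ξ (M ^ 3) x‖ ≤ 33 / M + 8 * fejer M x := by
  have hM0 : (0 : ℝ) < M := by exact_mod_cast hM
  have hK : 1 ≤ M ^ 3 := Nat.one_le_pow _ _ hM
  have hF := fejer_nonneg M x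
  rcases le_or_gt |x - round x| (1 / (8 * M)) with h | h
  · have h1 := fejer_ge M hM x h
    have h2 : ‖fracPhase ξ x - fracApprox ξ (M ^ 3) x‖ ≤ 2 := by
      refine (norm_sub_le _ _).trans ?_
      rw [norm_fracPhase]
      linarith [norm_fracApprox_le ξ (M ^ 3) hK x]
    have h3 : 0 ≤ 33 / (M : ℝ) := by positivity
    linarith
  · refine (norm_fracPhase_sub_fracApprox_le ξ hξ (M ^ 3) hK x _ (by positivity) h).trans ?_
    have h1 : Real.pi * (1 / (8 * (M : ℝ))) ≤ 1 / M := by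
      rw [mul_one_div, div_le_div_iff₀ (by positivity) hM0]
      nlinarith [Real.pi_lt_four]
    have h2 : 1 / (2 * ((M ^ 3 : ℕ) : ℝ) * (1 / (8 * (M : ℝ))) ^ 2) = 32 / M := by
      push_cast; field_simp; norm_num
    have h3 : 33 / (M : ℝ) = 1 / M + 32 / M := by rw [← add_div]; norm_num
    linarith

/-- Expanding the Fejér kernel, an exponential sum bound for `y` limits how often `y n` is close to
an integer. -/
lemma sum_fejer_le (M : ℕ) (hM : 1 ≤ M) (y : ℕ → ℝ) (a b : ℕ) (hab : a ≤ b) (E : ℝ) (hE : 0 ≤ E)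
    (h : ∀ l l' : ℕ, l < M → l' < M → l ≠ l' →
      ‖∑ n ∈ Ico a b, eC (((l : ℝ) - l') * y n)‖ ≤ E) :
    ∑ n ∈ Ico a b, fejer M (y n) ≤ ((b : ℝ) - a) / M + E := by
  have hM0 : (0 : ℝ) < M := by exact_mod_cast hM
  have hba : (0 : ℝ) ≤ (b : ℝ) - a := by
    rw [sub_nonneg]; exact_mod_cast hab
  have e1 : ((∑ n ∈ Ico a b, fejer M (y n) : ℝ) : ℂ) = ∑ q ∈ range M ×ˢ range M,
      1 / (M : ℂ) ^ 2 * ∑ n ∈ Ico a b, eC (((q.1 : ℝ) - q.2) * y n) := by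
    push_cast
    simp only [fejer_eq, mul_sum]
    rw [sum_comm]
  have e2 : ∑ n ∈ Ico a b, fejer M (y n) = ‖((∑ n ∈ Ico a b, fejer M (y n) : ℝ) : ℂ)‖ := by
    rw [Complex.norm_real, Real.norm_eq_abs,
      abs_of_nonneg (sum_nonneg fun n _ => fejer_nonneg _ _)]
  rw [e2, e1]
  have e3 : ∀ q ∈ range M ×ˢ range M,
      ‖1 / (M : ℂ) ^ 2 * ∑ n ∈ Ico a b, eC (((q.1 : ℝ) - q.2) * y n)‖ ≤
      (if q.1 = q.2 then 1 / (M : ℝ) ^ 2 * (b - a) else 0) + 1 / (M : ℝ) ^ 2 * E := by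
    intro q hq
    obtain ⟨q1, q2⟩ := mem_product.1 hq
    have h2 : ‖1 / (M : ℂ) ^ 2‖ = 1 / (M : ℝ) ^ 2 := by simp
    rw [norm_mul, h2]
    split_ifs with hqq
    · have := norm_sum_eC_le_card (fun n => ((q.1 : ℝ) - q.2) * y n) hab
      have h3 : 1 / (M : ℝ) ^ 2 * ‖∑ n ∈ Ico a b, eC (((q.1 : ℝ) - q.2) * y n)‖
        ≤ 1 / (M : ℝ) ^ 2 * (b - a) := by gcongr
      have h4 : 0 ≤ 1 / (M : ℝ) ^ 2 * E := by positivity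
      linarith
    · rw [zero_add]
      gcongr
      exact h q.1 q.2 (mem_range.1 q1) (mem_range.1 q2) hqq
  refine (norm_sum_le_of_le _ e3).trans ?_
  rw [sum_add_distrib, sum_const, card_product, card_range, sum_product]
  simp only [sum_ite_eq, mem_range]
  rw [sum_congr rfl (fun l hl => by rw [if_pos (mem_range.1 hl)]), sum_const, card_range,
    nsmul_eq_mul, nsmul_eq_mul]
  apply le_of_eq
  push_cast
  field_simp

/-! ### Exponential sums with integer parts -/

lemma norm_prod_sub_prod_le_sum {ι : Type*} (s : Finset ι) (f g : ι → ℂ)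
    (hf : ∀ i ∈ s, ‖f i‖ ≤ 1) (hg : ∀ i ∈ s, ‖g i‖ ≤ 1) :
    ‖∏ i ∈ s, f i - ∏ i ∈ s, g i‖ ≤ ∑ i ∈ s, ‖f i - g i‖ := by
  classical
  induction s using Finset.induction_on with
  | empty => simp
  | insert a s ha ih =>
    rw [prod_insert ha, prod_insert ha, sum_insert ha]
    have ih' := ih (fun i hi => hf i (mem_insert_of_mem hi)) (fun i hi => hg i (mem_insert_of_mem hi))
    have h1 : ‖∏ i ∈ s, f i‖ ≤ 1 := by
      rw [norm_prod]
      exact prod_le_one (fun i _ => norm_nonneg _) (fun i hi => hf i (mem_insert_of_mem hi))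
    have h2 := hg a (mem_insert_self a s)
    calc ‖f a * ∏ i ∈ s, f i - g a * ∏ i ∈ s, g i‖
        = ‖(f a - g a) * ∏ i ∈ s, f i + g a * (∏ i ∈ s, f i - ∏ i ∈ s, g i)‖ := by
          congr 1; ring
      _ ≤ ‖f a - g a‖ * ‖∏ i ∈ s, f i‖ + ‖g a‖ * ‖∏ i ∈ s, f i - ∏ i ∈ s, g i‖ := by
          refine (norm_add_le _ _).trans ?_
          rw [norm_mul, norm_mul]
      _ ≤ ‖f a - g a‖ * 1 + 1 * ∑ i ∈ s, ‖f i - g i‖ := by gcongr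
      _ = _ := by ring

/-- The smooth bound, together with its special case of a coefficient bounded away from `0`,
where the saving is a power of `N`. -/
lemma smooth_bound' {m : ℕ} (c : Fin m → ℝ) (hc : Function.Injective c) (hpos : ∀ i, 0 < c i)
    (hint : ∀ i, ∀ k : ℤ, c i ≠ (k : ℝ)) :
    ∃ C : ℝ, 1 ≤ C ∧ ∃ κ : ℝ, 0 < κ ∧ κ ≤ 1 ∧
    ∀ (N : ℕ) (θ : Fin m → ℝ) (a b : ℕ) (i : Fin m), 1 ≤ N →
      (∀ i, |θ i| ≤ 2 * N) → a ≤ b → N ≤ 2 * a → b ≤ N + 1 →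
      (∀ τ, 1 ≤ τ → τ ≤ |θ i| * (N : ℝ) ^ (c i) →
      ‖∑ n ∈ Ico a b, eC (∑ i, θ i * (n : ℝ) ^ (c i))‖
        ≤ C * (N * ((N : ℝ) ^ (-κ) + τ ^ (-κ)))) ∧
      (1 / 2 ≤ |θ i| → ‖∑ n ∈ Ico a b, eC (∑ i, θ i * (n : ℝ) ^ (c i))‖
        ≤ C * (N * (N : ℝ) ^ (-κ))) := by
  obtain ⟨C, hC, κ, hκ, hκ1, hS⟩ := smooth_bound c hc hint
  obtain ⟨c₀, hc₀, hc₀1, hc₀c⟩ : ∃ c₀ : ℝ, 0 < c₀ ∧ c₀ ≤ 1 ∧ ∀ i, c₀ ≤ c i := by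
    rcases isEmpty_or_nonempty (Fin m) with h | h
    · exact ⟨1, one_pos, le_rfl, fun i => h.elim i⟩
    · obtain ⟨i₀, hi₀⟩ := Finite.exists_min c
      exact ⟨min 1 (c i₀), lt_min one_pos (hpos i₀), min_le_left _ _,
        fun i => (min_le_right _ _).trans (hi₀ i)⟩
  refine ⟨3 * C, by linarith, κ * c₀, by positivity, mul_le_one₀ hκ1 hc₀.le hc₀1, ?_⟩
  intro N θ a b i hN hθ hab hNa hbN
  have hx1 : (1 : ℝ) ≤ N := by exact_mod_cast hN
  have hx0 : (0 : ℝ) < N := by linarith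
  have hκc : κ * c₀ ≤ κ := by nlinarith
  have hκc' : κ * c₀ ≤ κ * c i := by gcongr; exact hc₀c i
  have k1 : (N : ℝ) ^ (-κ) ≤ (N : ℝ) ^ (-(κ * c₀)) :=
    Real.rpow_le_rpow_of_exponent_le hx1 (neg_le_neg hκc)
  have k2 : (N : ℝ) ^ (-(κ * c i)) ≤ (N : ℝ) ^ (-(κ * c₀)) :=
    Real.rpow_le_rpow_of_exponent_le hx1 (neg_le_neg hκc')
  have hbaN : (b : ℝ) - a ≤ N := by
    have h1 : b ≤ N + a := by omega
    have h2 : (b : ℝ) ≤ N + a := by exact_mod_cast h1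
    linarith
  constructor
  · intro τ hτ1 hτ
    refine (hS N θ a b i τ hN hθ hab hNa hbN hτ1 hτ).trans ?_
    have : τ ^ (-κ) ≤ τ ^ (-(κ * c₀)) := Real.rpow_le_rpow_of_exponent_le hτ1 (neg_le_neg hκc)
    gcongr
    linarith
  · intro hhalf
    have hyc : 0 < (N : ℝ) ^ (c i) := by positivity
    have ht : ((N : ℝ) ^ (c i) / 2) ^ (-κ) ≤ 2 * (N : ℝ) ^ (-(κ * c i)) := by
      rw [Real.div_rpow hyc.le (by norm_num), ← Real.rpow_mul hx0.le, Real.rpow_neg (by norm_num),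
        div_inv_eq_mul, mul_comm, show c i * -κ = -(κ * c i) by ring]
      gcongr
      exact Real.rpow_le_self_of_one_le (by norm_num) hκ1
    rcases le_or_gt 1 ((N : ℝ) ^ (c i) / 2) with h1 | h1
    · refine (hS N θ a b i _ hN hθ hab hNa hbN h1 (by nlinarith)).trans ?_
      calc C * (N * ((N : ℝ) ^ (-κ) + ((N : ℝ) ^ (c i) / 2) ^ (-κ)))
          ≤ C * (N * (3 * (N : ℝ) ^ (-(κ * c₀)))) := by gcongr; linarith
        _ = _ := by ring
    · -- here `N` is bounded and the trivial bound suffices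
      refine (norm_sum_eC_le_card _ hab).trans (hbaN.trans ?_)
      have g1 : 1 ≤ ((N : ℝ) ^ (c i) / 2) ^ (-κ) :=
        Real.one_le_rpow_of_pos_of_le_one_of_nonpos (by positivity) h1.le (by linarith)
      have g2 : 1 ≤ 2 * (N : ℝ) ^ (-(κ * c₀)) := by linarith
      have g3 : 0 < (N : ℝ) ^ (-(κ * c₀)) := by positivity
      have g4 : 1 ≤ 3 * C * (N : ℝ) ^ (-(κ * c₀)) := by nlinarith
      nlinarith

/-- The phase with integer parts, as a smooth phase times periodic factors. -/
lemma eC_floor {m : ℕ} (ξ y : Fin m → ℝ) :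
    eC (∑ i, ξ i * (⌊y i⌋ : ℝ)) = ∏ i, eC (ξ i * y i) * fracPhase (ξ i) (y i) := by
  rw [eC_sum]
  refine prod_congr rfl fun i _ => ?_
  rw [fracPhase, ← eC_add]
  congr 1
  rw [Int.fract]; ring

/-- The sum with `fracPhase` replaced by its approximation, bounded by expanding the product into
smooth exponential sums: the frequency-zero tuples contribute the bound `Ed`, the remaining ones
`Eo` each. -/
lemma approx_sum_le {m : ℕ} (ξ : Fin m → ℝ) (K : ℕ) (hK : 1 ≤ K) (y : ℕ → Fin m → ℝ) (a b : ℕ)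
    (Ed Eo : ℝ) (hEo : 0 ≤ Eo)
    (hd : ‖∑ n ∈ Ico a b, eC (∑ i, ξ i * y n i)‖ ≤ Ed)
    (ho : ∀ p : Fin m → ℕ × ℕ, (∀ i, (p i).1 < K ∧ (p i).2 < K) → (∃ i, (p i).1 ≠ (p i).2) →
      ‖∑ n ∈ Ico a b, eC (∑ i, (ξ i + ((p i).1 - (p i).2)) * y n i)‖ ≤ Eo) :
    ‖∑ n ∈ Ico a b, ∏ i, eC (ξ i * y n i) * fracApprox (ξ i) K (y n i)‖
      ≤ Ed + ((K : ℝ) * K) ^ m * Eo := by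
  have hK0 : (0 : ℝ) < K := by exact_mod_cast hK
  have hEd : 0 ≤ Ed := (norm_nonneg _).trans hd
  set t : Fin m → Finset (ℕ × ℕ) := fun _ => range K ×ˢ range K with ht
  have e1 : ∑ n ∈ Ico a b, ∏ i, eC (ξ i * y n i) * fracApprox (ξ i) K (y n i) =
      ∑ p ∈ Fintype.piFinset t, (∏ i, fracCoef (ξ i) K (p i)) *
        ∑ n ∈ Ico a b, eC (∑ i, (ξ i + ((p i).1 - (p i).2)) * y n i) := by
    simp only [mul_sum]
    rw [sum_comm]
    refine sum_congr rfl fun n _ => ?_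
    simp only [fracApprox_eq, mul_sum]
    rw [prod_univ_sum]
    refine sum_congr rfl fun p _ => ?_
    rw [eC_sum, ← prod_mul_distrib]
    refine prod_congr rfl fun i _ => ?_
    rw [add_mul, eC_add]; ring
  rw [e1]
  have e2 : ∀ p ∈ Fintype.piFinset t, ‖(∏ i, fracCoef (ξ i) K (p i)) *
        ∑ n ∈ Ico a b, eC (∑ i, (ξ i + ((p i).1 - (p i).2)) * y n i)‖ ≤
      Ed * ∏ i, (if (p i).1 = (p i).2 then 1 / (K : ℝ) else 0) + Eo := by
    intro p hp
    have hp' : ∀ i, (p i).1 < K ∧ (p i).2 < K := by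
      intro i
      have := Fintype.mem_piFinset.1 hp i
      simpa [ht] using this
    rw [norm_mul, norm_prod]
    have n1 : ∏ i, ‖fracCoef (ξ i) K (p i)‖ ≤ ∏ _i : Fin m, 1 / (K : ℝ) :=
      prod_le_prod (fun i _ => norm_nonneg _) (fun i _ => norm_fracCoef_le _ K hK _)
    have n0 : 0 ≤ ∏ i, (if (p i).1 = (p i).2 then 1 / (K : ℝ) else 0) :=
      prod_nonneg fun i _ => by split_ifs <;> positivity
    by_cases hdiag : ∃ i, (p i).1 ≠ (p i).2
    · have n2 : ∏ i, ‖fracCoef (ξ i) K (p i)‖ ≤ 1 := by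
        refine n1.trans (prod_le_one (fun i _ => by positivity) fun i _ => ?_)
        rw [div_le_one hK0]; exact_mod_cast hK
      have n3 := ho p hp' hdiag
      have n4 := mul_le_mul n2 n3 (norm_nonneg _) zero_le_one
      have n5 : 0 ≤ Ed * ∏ i, (if (p i).1 = (p i).2 then 1 / (K : ℝ) else 0) := by positivity
      linarith
    · push Not at hdiag
      have s1 : ∀ n, (∑ i, (ξ i + (((p i).1 : ℝ) - (p i).2)) * y n i) = ∑ i, ξ i * y n i := by
        intro n
        refine sum_congr rfl fun i _ => ?_
        rw [hdiag i]; simp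
      simp only [s1]
      rw [prod_congr rfl fun i _ => if_pos (hdiag i)]
      have n4 := mul_le_mul n1 hd (norm_nonneg _) (by positivity)
      linarith
  refine (norm_sum_le_of_le _ e2).trans ?_
  rw [sum_add_distrib, ← mul_sum]
  have e3 := prod_univ_sum t (fun _ q => if q.1 = q.2 then 1 / (K : ℝ) else 0)
  have e4 : ∑ q ∈ range K ×ˢ range K, (if q.1 = q.2 then 1 / (K : ℝ) else 0) = 1 := by
    rw [sum_product]
    simp only [sum_ite_eq, mem_range]
    rw [sum_congr rfl (fun l hl => by rw [if_pos (mem_range.1 hl)]), sum_const, card_range,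
      nsmul_eq_mul]
    field_simp
  rw [← e3]
  simp only [ht, e4, prod_const_one, mul_one]
  rw [sum_const, Fintype.card_piFinset]
  simp

set_option maxHeartbeats 1000000 in
/-- The exponential sum bound over subintervals of `[N/2, N]`, for frequencies in
`[-1/2, 1/2]`. -/
lemma floor_sum_bound {m : ℕ} (hm : 0 < m) (c : Fin m → ℝ) (hc : Function.Injective c)
    (hpos : ∀ i, 0 < c i) (hint : ∀ i, ∀ k : ℤ, c i ≠ (k : ℝ)) :
    ∃ C : ℝ, 1 ≤ C ∧ ∃ κ : ℝ, 0 < κ ∧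
    ∀ (N : ℕ) (ξ : Fin m → ℝ) (a b : ℕ) (i : Fin m) (τ : ℝ), 1 ≤ N →
      (∀ i, |ξ i| ≤ 1 / 2) → a ≤ b → N ≤ 2 * a → b ≤ N + 1 → 1 ≤ τ →
      τ ≤ |ξ i| * (N : ℝ) ^ (c i) →
      ‖∑ n ∈ Ico a b, eC (∑ i, ξ i * (⌊(n : ℝ) ^ (c i)⌋ : ℝ))‖
        ≤ C * (N * ((N : ℝ) ^ (-κ) + τ ^ (-κ))) := by
  obtain ⟨C, hC, κ, hκ, hκ1, hS⟩ := smooth_bound' c hc hpos hint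
  have hm1 : (1 : ℝ) ≤ m := by exact_mod_cast hm
  have hm0 : (0 : ℝ) < m := by linarith
  set ε := κ / (12 * m) with hε
  have hε0 : 0 < ε := by positivity
  have hε1 : ε ≤ κ / 12 := by
    rw [hε]; gcongr; linarith
  refine ⟨m * (82 + 8 * C) + 2 * C, by nlinarith, ε, hε0, ?_⟩
  intro N ξ a b i₀ τ hN hξ hab hNa hbN hτ1 hτ
  have hx1 : (1 : ℝ) ≤ N := by exact_mod_cast hN
  set x : ℝ := (N : ℝ) with hx
  have hx0 : 0 < x := by linarith
  have hba0 : (0 : ℝ) ≤ (b : ℝ) - a := by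
    rw [sub_nonneg]; exact_mod_cast hab
  have hbaN : (b : ℝ) - a ≤ x := by
    have h1 : b ≤ N + a := by omega
    have h2 : (b : ℝ) ≤ N + a := by exact_mod_cast h1
    linarith
  set M := ⌊x ^ ε⌋₊ with hM
  have hxε : 1 ≤ x ^ ε := Real.one_le_rpow hx1 hε0.le
  have hM1 : 1 ≤ M := Nat.le_floor (by simpa using hxε)
  have hM1' : (1 : ℝ) ≤ M := by exact_mod_cast hM1
  have hMle : (M : ℝ) ≤ x ^ ε := Nat.floor_le (by linarith)
  have hMge : x ^ ε / 2 ≤ M := by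
    have h1 := Nat.lt_floor_add_one (x ^ ε)
    linarith
  have hMinv : 1 / (M : ℝ) ≤ 2 * x ^ (-ε) := by
    rw [Real.rpow_neg hx0.le, div_le_iff₀ (by linarith)]
    calc (1 : ℝ) = 2 * (x ^ ε)⁻¹ * (x ^ ε / 2) := by field_simp
      _ ≤ _ := by gcongr
  set K := M ^ 3 with hK
  have hK1 : 1 ≤ K := Nat.one_le_pow _ _ hM1
  have hKx : (K : ℝ) ≤ x := by
    rw [hK]; push_cast
    calc (M : ℝ) ^ 3 ≤ (x ^ ε) ^ 3 := by gcongr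
      _ = x ^ (ε * 3) := by rw [← Real.rpow_mul_natCast hx0.le]; norm_num
      _ ≤ x ^ (1 : ℝ) := Real.rpow_le_rpow_of_exponent_le hx1 (by linarith)
      _ = x := Real.rpow_one x
  have hMK : M ≤ K := by rw [hK]; exact Nat.le_self_pow (by norm_num) M
  have hMx : (M : ℝ) ≤ x := le_trans (by exact_mod_cast hMK) hKx
  set Eo := C * (x * x ^ (-κ)) with hEo
  have hEo0 : 0 ≤ Eo := by positivity
  set Ed := C * (x * (x ^ (-κ) + τ ^ (-κ))) with hEd
  -- differences of distinct naturals below `K`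
  have hdiff : ∀ u v : ℕ, u ≠ v → 1 ≤ |(u : ℝ) - v| := by
    intro u v huv
    have h1 : (1 : ℤ) ≤ |(u : ℤ) - v| := Int.one_le_abs (by omega)
    exact_mod_cast h1
  have hdiff' : ∀ u v : ℕ, u < K → v < K → |(u : ℝ) - v| ≤ x := by
    intro u v hu hv
    have c1 : (u : ℝ) < K := by exact_mod_cast hu
    have c2 : (v : ℝ) < K := by exact_mod_cast hv
    have c3 : (0 : ℝ) ≤ u := Nat.cast_nonneg _
    have c4 : (0 : ℝ) ≤ v := Nat.cast_nonneg _
    rw [abs_le]; constructor <;> linarith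
  have hfej : ∀ i, ∑ n ∈ Ico a b, fejer M ((n : ℝ) ^ c i) ≤ x / M + Eo := by
    intro i
    refine (sum_fejer_le M hM1 (fun n => (n : ℝ) ^ c i) a b hab Eo hEo0 ?_).trans ?_
    · intro l l' hl hl' hll
      have := (hS N (Pi.single i ((l : ℝ) - l')) a b i hN (by
        intro j
        rcases eq_or_ne j i with rfl | hj
        · rw [Pi.single_eq_same]
          have := hdiff' l l' (by omega) (by omega)
          linarith
        · rw [Pi.single_eq_of_ne hj, abs_zero]; linarith) hab hNa hbN).2 (by
        rw [Pi.single_eq_same]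
        have := hdiff l l' hll
        linarith)
      have s1 : ∀ n : ℕ, ∑ j, (Pi.single i ((l : ℝ) - l') : Fin m → ℝ) j * (n : ℝ) ^ c j
          = ((l : ℝ) - l') * (n : ℝ) ^ c i := by
        intro n
        rw [sum_eq_single i]
        · rw [Pi.single_eq_same]
        · intro j _ hj; rw [Pi.single_eq_of_ne hj, zero_mul]
        · simp
      simpa only [s1] using this
    · gcongr
  have hA := approx_sum_le ξ K hK1 (fun n i => (n : ℝ) ^ c i) a b Ed Eo hEo0
    ((hS N ξ a b i₀ hN (fun i => by linarith [hξ i]) hab hNa hbN).1 τ hτ1 hτ) (by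
      intro p hp ⟨i, hi⟩
      refine (hS N (fun i => ξ i + ((p i).1 - (p i).2)) a b i hN (fun j => ?_) hab hNa hbN).2 ?_
      · have h1 := abs_add_le (ξ j) (((p j).1 : ℝ) - (p j).2)
        have h2 := hdiff' _ _ (hp j).1 (hp j).2
        have h3 := hξ j
        linarith
      · have h1 := hdiff _ _ hi
        have h2 := abs_sub_abs_le_abs_sub (((p i).1 : ℝ) - (p i).2) (-ξ i)
        rw [abs_neg, sub_neg_eq_add, add_comm] at h2
        have h3 := hξ i
        linarith)
  have hB : ‖∑ n ∈ Ico a b, eC (∑ i, ξ i * (⌊(n : ℝ) ^ (c i)⌋ : ℝ)) -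
      ∑ n ∈ Ico a b, ∏ i, eC (ξ i * (n : ℝ) ^ c i) * fracApprox (ξ i) K ((n : ℝ) ^ c i)‖ ≤
      m * (41 * (x * (1 / M)) + 8 * Eo) := by
    rw [← sum_sub_distrib]
    have p1 : ∀ n ∈ Ico a b, ‖eC (∑ i, ξ i * (⌊(n : ℝ) ^ (c i)⌋ : ℝ)) -
        ∏ i, eC (ξ i * (n : ℝ) ^ c i) * fracApprox (ξ i) K ((n : ℝ) ^ c i)‖ ≤
        ∑ i, (33 / (M : ℝ) + 8 * fejer M ((n : ℝ) ^ c i)) := by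
      intro n _
      rw [eC_floor ξ (fun i => (n : ℝ) ^ c i)]
      refine (norm_prod_sub_prod_le_sum _ _ _ (fun i _ => ?_) (fun i _ => ?_)).trans
        (sum_le_sum fun i _ => ?_)
      · rw [norm_mul, norm_eC, norm_fracPhase, one_mul]
      · rw [norm_mul, norm_eC, one_mul]; exact norm_fracApprox_le _ _ hK1 _
      · rw [← mul_sub, norm_mul, norm_eC, one_mul]
        exact norm_fracPhase_sub_fracApprox_le' (ξ i) (hξ i) M hM1 _
    refine (norm_sum_le_of_le _ p1).trans ?_
    rw [sum_comm]
    have p2 : ∀ i ∈ (univ : Finset (Fin m)),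
        ∑ n ∈ Ico a b, (33 / (M : ℝ) + 8 * fejer M ((n : ℝ) ^ c i)) ≤
          41 * (x * (1 / M)) + 8 * Eo := by
      intro i _
      rw [sum_add_distrib, ← mul_sum, sum_const, Nat.card_Ico, nsmul_eq_mul, Nat.cast_sub hab]
      have q1 := hfej i
      have q2 : ((b : ℝ) - a) * (33 / M) ≤ x * (33 / M) := by gcongr
      have q3 : x * (33 / (M : ℝ)) = 33 * (x * (1 / M)) := by ring
      have q4 : x / (M : ℝ) = x * (1 / M) := by ring
      linarith
    refine (sum_le_sum p2).trans ?_
    rw [sum_const, card_univ, Fintype.card_fin, nsmul_eq_mul]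
  have hKm : ((K : ℝ) * K) ^ m ≤ x ^ (κ / 2) := by
    calc ((K : ℝ) * K) ^ m = (M : ℝ) ^ (6 * m) := by
          rw [hK]; push_cast; rw [pow_mul]; congr 1; ring
      _ ≤ (x ^ ε) ^ (6 * m) := by gcongr
      _ = x ^ (κ / 2) := by
          rw [← Real.rpow_mul_natCast hx0.le]
          congr 1
          rw [hε]; push_cast; field_simp; norm_num
  have hEo1 : ((K : ℝ) * K) ^ m * Eo ≤ C * (x * x ^ (-ε)) := by
    calc ((K : ℝ) * K) ^ m * Eo ≤ x ^ (κ / 2) * Eo := by gcongr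
      _ = C * (x * x ^ (κ / 2 + -κ)) := by rw [hEo, Real.rpow_add hx0]; ring
      _ ≤ _ := by gcongr; linarith
  have hxκ : x ^ (-κ) ≤ x ^ (-ε) := Real.rpow_le_rpow_of_exponent_le hx1 (by linarith)
  have hτκ : τ ^ (-κ) ≤ τ ^ (-ε) := Real.rpow_le_rpow_of_exponent_le hτ1 (by linarith)
  have hEo2 : Eo ≤ C * (x * x ^ (-ε)) := by rw [hEo]; gcongr
  have hEd2 : Ed ≤ C * (x * (x ^ (-ε) + τ ^ (-ε))) := by rw [hEd]; gcongr
  have hMx2 : x * (1 / (M : ℝ)) ≤ x * (2 * x ^ (-ε)) := by gcongr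
  set S₁ := ∑ n ∈ Ico a b, eC (∑ i, ξ i * (⌊(n : ℝ) ^ (c i)⌋ : ℝ)) with hS₁
  set S₂ := ∑ n ∈ Ico a b, ∏ i, eC (ξ i * (n : ℝ) ^ c i) * fracApprox (ξ i) K ((n : ℝ) ^ c i)
    with hS₂
  have hfin : ‖S₁‖ ≤ ‖S₁ - S₂‖ + ‖S₂‖ := by
    have := norm_add_le (S₁ - S₂) S₂
    rwa [sub_add_cancel] at this
  have hτ0 : 0 ≤ x * τ ^ (-ε) := by positivity
  calc ‖S₁‖ ≤ m * (41 * (x * (1 / M)) + 8 * Eo) + (Ed + ((K : ℝ) * K) ^ m * Eo) := by linarith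
    _ ≤ m * (41 * (x * (2 * x ^ (-ε))) + 8 * (C * (x * x ^ (-ε)))) +
        (C * (x * (x ^ (-ε) + τ ^ (-ε))) + C * (x * x ^ (-ε))) := by gcongr
    _ = (m * (82 + 8 * C) + 2 * C) * (x * x ^ (-ε)) + C * (x * τ ^ (-ε)) := by ring
    _ ≤ (m * (82 + 8 * C) + 2 * C) * (x * x ^ (-ε)) +
        (m * (82 + 8 * C) + 2 * C) * (x * τ ^ (-ε)) := by
        gcongr
        nlinarith
    _ = _ := by ring

/-! ### The symbol -/

/-- The frequencies of `mZ` matter only modulo `1`. -/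
lemma mZ_eq (m : ℕ) (c : Fin m → ℝ) (N : ℕ) (ξ : Fin m → ℝ) :
    mZ m c N ξ = (N : ℂ)⁻¹ * ∑ n ∈ Ico (N / 2 + 1) (N + 1),
      eC (∑ i, (ξ i - round (ξ i)) * (⌊(n : ℝ) ^ c i⌋ : ℝ)) := by
  unfold mZ
  rw [← sum_filter]
  congr 1
  refine sum_congr ?_ fun n _ => ?_
  · ext n
    simp only [mem_filter, mem_Icc, mem_Ico]
    omega
  · rw [eC_sum, eC_sum]
    refine prod_congr rfl fun i _ => ?_
    have h := eC_int (round (ξ i) * ⌊(n : ℝ) ^ c i⌋)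
    push_cast at h
    rw [sub_mul, eC_sub, h, map_one, mul_one]

lemma mZ_bound {m : ℕ} (hm : 0 < m) (c : Fin m → ℝ) (hc : Function.Injective c)
    (hpos : ∀ i, 0 < c i) (hint : ∀ i, ∀ k : ℤ, c i ≠ (k : ℝ)) :
    ∃ C : ℝ, 1 ≤ C ∧ ∃ κ : ℝ, 0 < κ ∧ ∀ N : ℕ, 1 ≤ N → ∀ (ξ : Fin m → ℝ) (i : Fin m),
      0 < distT (ξ i) →
      ‖mZ m c N ξ‖ ≤ C * ((N : ℝ) ^ (-κ) + (distT (ξ i) * (N : ℝ) ^ (c i)) ^ (-κ)) := by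
  obtain ⟨C, hC, κ, hκ, hS⟩ := floor_sum_bound hm c hc hpos hint
  refine ⟨C, hC, κ, hκ, ?_⟩
  intro N hN ξ i hi
  have hx0 : (0 : ℝ) < N := by exact_mod_cast hN
  rw [mZ_eq, norm_mul, norm_inv, Complex.norm_natCast, inv_mul_le_iff₀ hx0]
  set τ := distT (ξ i) * (N : ℝ) ^ (c i) with hτ
  have hτ0 : 0 < τ := by positivity
  rcases le_or_gt 1 τ with h1 | h1
  · refine (hS N (fun i => ξ i - round (ξ i)) (N / 2 + 1) (N + 1) i τ hN
      (fun i => abs_sub_round _) (by omega) (by omega) le_rfl h1 le_rfl).trans (le_of_eq ?_)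
    ring
  · refine (norm_sum_eC_le_card _ (by omega)).trans ?_
    have g1 : 1 ≤ τ ^ (-κ) :=
      Real.one_le_rpow_of_pos_of_le_one_of_nonpos hτ0 h1.le (by linarith)
    have g2 : 0 ≤ (N : ℝ) ^ (-κ) := by positivity
    have g3 : (1 : ℝ) ≤ C * ((N : ℝ) ^ (-κ) + τ ^ (-κ)) :=
      one_le_mul_of_one_le_of_one_le hC (by linarith)
    have g4 : (0 : ℝ) ≤ ((N / 2 : ℕ) : ℝ) := Nat.cast_nonneg _
    push_cast
    nlinarith

/-- direct form of the exponential sum bound, (1.9) of the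
paper: for non-integer `0 < c₁ < ⋯ < c_m` there are `C, κ > 0` such that for
all `N ≥ 1` and `ξ₁,…,ξ_m ∈ ℝ`,
`|m_{N;ℤ}(ξ)| ≤ C (N^{−κ} + min_i (‖ξ_i‖_𝕋 N^{c_i})^{−κ})`
(with the `ℝ≥0∞`-convention `0^{−κ} = ∞` for the minimum). -/
theorem stmt10 {m : ℕ} (hm : 0 < m) (c : Fin m → ℝ)
    (hpos : ∀ i, 0 < c i) (hmono : StrictMono c)
    (hint : ∀ i, ∀ k : ℤ, c i ≠ (k : ℝ)) :
    ∃ C : ℝ, 0 < C ∧ ∃ κ : ℝ, 0 < κ ∧ ∀ N : ℕ, 1 ≤ N → ∀ ξ : Fin m → ℝ,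
      (‖mZ m c N ξ‖₊ : ℝ≥0∞) ≤ ENNReal.ofReal C *
        ((N : ℝ≥0∞) ^ (-κ) +
          ⨅ i, (ENNReal.ofReal (distT (ξ i)) * (N : ℝ≥0∞) ^ (c i)) ^ (-κ)) := by
  obtain ⟨C, hC, κ, hκ, hS⟩ := mZ_bound hm c hmono.injective hpos hint
  refine ⟨C, by linarith, κ, hκ, ?_⟩
  intro N hN ξ
  have hx0 : (0 : ℝ) < N := by exact_mod_cast hN
  have : Nonempty (Fin m) := ⟨⟨0, hm⟩⟩
  obtain ⟨i, hi⟩ := exists_eq_ciInf_of_finite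
    (f := fun i => (ENNReal.ofReal (distT (ξ i)) * (N : ℝ≥0∞) ^ (c i)) ^ (-κ))
  rw [← hi]
  have hC0 : ENNReal.ofReal C ≠ 0 := by
    rw [Ne, ENNReal.ofReal_eq_zero]; linarith
  rcases (abs_nonneg (ξ i - round (ξ i))).eq_or_lt with h0 | h0
  · -- `ξ i` is an integer and the right-hand side is infinite
    have h1 : distT (ξ i) = 0 := h0.symm
    rw [h1, ENNReal.ofReal_zero, zero_mul, ENNReal.zero_rpow_of_neg (by linarith), add_top,
      ENNReal.mul_top hC0]
    exact le_top
  · have hd : 0 < distT (ξ i) := h0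
    have hN' : (N : ℝ≥0∞) = ENNReal.ofReal N := (ENNReal.ofReal_natCast N).symm
    rw [hN', ENNReal.ofReal_rpow_of_pos hx0, ENNReal.ofReal_rpow_of_pos hx0,
      ← ENNReal.ofReal_mul hd.le, ENNReal.ofReal_rpow_of_pos (by positivity),
      ← ENNReal.ofReal_add (by positivity) (by positivity), ← ENNReal.ofReal_mul (by linarith),
      ← enorm_eq_nnnorm, ← ofReal_norm]
    exact ENNReal.ofReal_le_ofReal (hS N hN ξ i hd)

end
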